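/- Under the standing assumptions of Section 4 of the paper, assume additionally that idempotent morphisms in C split and that d̂₁ := ê₁∘d₁ and d̂₂ := ê₂∘d₂ are regular epimorphisms. Then for any modules (V, v) and (W, w) over the semigroup A, the object V∘W splitting the idempotent s carries an A-module structure: there is a unique morphism b : A⊗(V∘W) → V∘W with b∘(1⊗ŝ) = ŝ∘b⁰ (b⁰ the action of Lemma 4.6), and b is associative, a regular epimorphism, and non-degenerate on the left with respect to 𝒴. Moreover, for any morphisms of A-modules f : V → V′ and g : W → W′, the induced morphism ŝ′∘(f⊗g)∘š : V∘W → V′∘W′ is a morphism of A-modules. -/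

import Mathlib

open CategoryTheory Category MonoidalCategory Limits

universe v u

namespace WeakMultiplierBimonoid

variable {C : Type u} [Category.{v} C] [MonoidalCategory C] [BraidedCategory C]

def wl {A : C} (f : A ⊗ A ⟶ A ⊗ A) : A ⊗ (A ⊗ A) ⟶ A ⊗ (A ⊗ A) :=
  (α_ A A A).inv ≫ (f ▷ A) ≫ (α_ A A A).hom

def ml {A : C} (f : A ⊗ A ⟶ A) : A ⊗ (A ⊗ A) ⟶ A ⊗ A :=
  (α_ A A A).inv ≫ (f ▷ A)

def NdLeftOn {Z V W : C} (v : Z ⊗ V ⟶ W) (𝒴 : Set C) : Prop :=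
  ∀ (X : C), ∀ Y ∈ 𝒴, Function.Injective
    (fun g : X ⟶ V ⊗ Y => (Z ◁ g) ≫ (α_ Z V Y).inv ≫ (v ▷ Y))

def NdRightOn {Z V W : C} (v : Z ⊗ V ⟶ W) (𝒴 : Set C) : Prop :=
  NdLeftOn ((β_ V Z).hom ≫ v) 𝒴

/-- The "middle braiding" `1 ⊗ c ⊗ 1 : A⁴ ⟶ A⁴` on `(A ⊗ A) ⊗ (A ⊗ A)`. -/
def midSw (A : C) : (A ⊗ A) ⊗ (A ⊗ A) ⟶ (A ⊗ A) ⊗ (A ⊗ A) :=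
  (α_ A A (A ⊗ A)).hom ≫ (A ◁ (α_ A A A).inv) ≫ (A ◁ ((β_ A A).hom ▷ A)) ≫
    (A ◁ (α_ A A A).hom) ≫ (α_ A A (A ⊗ A)).inv

/-- A regular weak multiplier bimonoid on an object `A` of a braided monoidal category,
with multiplication non-degenerate with respect to the class `𝒴`
(Definition 2.9 of the paper). -/
structure RWMB (A : C) (𝒴 : Set C) where
  t₁ : A ⊗ A ⟶ A ⊗ A
  t₂ : A ⊗ A ⟶ A ⊗ A
  t₃ : A ⊗ A ⟶ A ⊗ A
  t₄ : A ⊗ A ⟶ A ⊗ A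
  e₁ : A ⊗ A ⟶ A ⊗ A
  e₂ : A ⊗ A ⟶ A ⊗ A
  j : A ⟶ 𝟙_ C
  /-- the induced multiplication -/
  m : A ⊗ A ⟶ A
  /-- counit condition (m1); in particular `m` is the induced multiplication -/
  hm₁ : m = t₁ ≫ (j ▷ A) ≫ (λ_ A).hom
  /-- counit condition (m2) -/
  hm₂ : m = t₂ ≫ (A ◁ j) ≫ (ρ_ A).hom
  /-- counit condition (m3) -/
  hm₃ : m = (β_ A A).hom ≫ t₃ ≫ (j ▷ A) ≫ (λ_ A).hom
  /-- counit condition (m4) -/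
  hm₄ : m = (β_ A A).hom ≫ t₄ ≫ (A ◁ j) ≫ (ρ_ A).hom
  /-- the class `𝒴` contains the monoidal unit -/
  memI : (𝟙_ C) ∈ 𝒴
  memA : A ∈ 𝒴
  memAA : (A ⊗ A) ∈ 𝒴
  /-- `m` is non-degenerate on the left with respect to `𝒴` -/
  ndl : NdLeftOn m 𝒴
  /-- `m` is non-degenerate on the right with respect to `𝒴` -/
  ndr : NdRightOn m 𝒴
  /-- relation (c12) -/
  hc12 : (A ◁ t₁) ≫ ml m = wl t₂ ≫ (A ◁ m)
  /-- relation (c13) -/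
  hc13 : wl t₁ ≫ (A ◁ (β_ A A).hom) ≫ (A ◁ m)
    = (A ◁ (β_ A A).hom) ≫ wl t₃ ≫ (A ◁ m)
  /-- relation (c14) -/
  hc14 : (A ◁ t₁) ≫ wl (β_ A A).hom ≫ ml m = wl t₄ ≫ (A ◁ m)
  /-- relation (c23) -/
  hc23 : wl t₂ ≫ (A ◁ (β_ A A).hom) ≫ (A ◁ m) = (A ◁ t₃) ≫ ml m
  /-- relation (c24) -/
  hc24 : (A ◁ t₂) ≫ wl (β_ A A).hom ≫ ml m = wl (β_ A A).hom ≫ (A ◁ t₄) ≫ ml m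
  /-- relation (c34) -/
  hc34 : (A ◁ t₃) ≫ wl (β_ A A).hom ≫ ml m = wl t₄ ≫ (A ◁ (β_ A A).hom) ≫ (A ◁ m)
  /-- interchange relation for `(t₂, t₁)` -/
  hi21 : (A ◁ t₁) ≫ wl t₂ = wl t₂ ≫ (A ◁ t₁)
  /-- interchange relation for `(t₄, t₁)` -/
  hi41 : (A ◁ t₁) ≫ wl t₄ = wl t₄ ≫ (A ◁ t₁)
  /-- interchange relation for `(t₂, t₃)` -/
  hi23 : (A ◁ t₃) ≫ wl t₂ = wl t₂ ≫ (A ◁ t₃)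
  /-- interchange relation for `(t₄, t₃)` -/
  hi43 : (A ◁ t₃) ≫ wl t₄ = wl t₄ ≫ (A ◁ t₃)
  /-- compatibility of the idempotents `e₁`, `e₂`:
  `(m ⊗ m) ∘ (1 ⊗ c ⊗ 1) ∘ (1 ⊗ 1 ⊗ e₁) = (m ⊗ m) ∘ (1 ⊗ c ⊗ 1) ∘ (e₂ ⊗ 1 ⊗ 1)` -/
  hecomp : ((A ⊗ A) ◁ e₁) ≫ midSw A ≫ (m ▷ (A ⊗ A)) ≫ (A ◁ m)
    = (e₂ ▷ (A ⊗ A)) ≫ midSw A ≫ (m ▷ (A ⊗ A)) ≫ (A ◁ m)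
  /-- Axiom I for the weakly counital fusion morphism `(t₁, e₁, j)` -/
  ax1 : (A ◁ t₁) ≫ wl (β_ A A).hom ≫ (A ◁ t₁) ≫ wl (β_ A A).inv ≫ wl t₁
    = wl t₁ ≫ (A ◁ t₁)
  /-- Axiom II -/
  ax2 : e₁ ≫ e₁ = e₁
  /-- Axiom III -/
  ax3 : t₁ ≫ e₁ = t₁
  /-- Axiom IV -/
  ax4 : (A ◁ e₁) ≫ (A ◁ (β_ A A).inv) ≫ wl t₁ ≫ (A ◁ (β_ A A).hom) ≫ ml m
    = (A ◁ (β_ A A).inv) ≫ wl t₁ ≫ (A ◁ (β_ A A).hom) ≫ ml m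
  /-- Axiom V -/
  ax5 : (A ◁ t₁) ≫ wl e₁ = wl e₁ ≫ (A ◁ t₁)
  /-- Axiom VI -/
  ax6 : wl t₁ ≫ (A ◁ e₁)
    = (A ◁ (β_ A A).inv) ≫ wl e₁ ≫ (A ◁ (β_ A A).hom) ≫ wl t₁
  /-- Axiom VII -/
  ax7 : wl t₁ ≫ (A ◁ ((j ▷ A) ≫ (λ_ A).hom)) ≫ m
    = (A ◁ (β_ A A).hom) ≫ (A ◁ e₁) ≫ (A ◁ ((A ◁ j) ≫ (ρ_ A).hom)) ≫ m
  /-- Axiom VIII -/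
  ax8 : wl t₁ ≫ (A ◁ (β_ A A).hom) ≫ ml m ≫ (j ▷ A) ≫ (λ_ A).hom
    = (A ◁ (β_ A A).hom) ≫ (A ◁ e₁) ≫ (A ◁ ((j ▷ A) ≫ (λ_ A).hom)) ≫ m

namespace RWMB

variable {A : C} {𝒴 : Set C} (S : RWMB A 𝒴)

/-- `⊓ᴸ₁ := (j ⊗ 1) ∘ e₁`. -/
def piL1 : A ⊗ A ⟶ A := S.e₁ ≫ (S.j ▷ A) ≫ (λ_ A).hom

/-- `⊓ᴸ₂ := (j ⊗ 1) ∘ t₄ ∘ c`. -/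
def piL2 : A ⊗ A ⟶ A := (β_ A A).hom ≫ S.t₄ ≫ (S.j ▷ A) ≫ (λ_ A).hom

/-- `⊓̄ᴿ₁ ∘ c⁻¹ = (1 ⊗ j) ∘ e₁`, the second leg of the coequalizer defining the base
object. -/
def piBarR1c : A ⊗ A ⟶ A := S.e₁ ≫ (A ◁ S.j) ≫ (ρ_ A).hom

end RWMB


/-- A module over the semigroup `(A, m)`, relative to the class `𝒴`: an object of `𝒴`
with an associative action which is a regular epimorphism and non-degenerate on the
left with respect to `𝒴`. -/
structure AModule (A : C) (m : A ⊗ A ⟶ A) (𝒴 : Set C) where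
  V : C
  mem : V ∈ 𝒴
  act : A ⊗ V ⟶ V
  assoc : (A ◁ act) ≫ act = (α_ A A V).inv ≫ (m ▷ V) ≫ act
  regEpi : Nonempty (RegularEpi act)
  nd : NdLeftOn act 𝒴

/-- The canonical idempotent
`s := (1 ⊗ ε ⊗ 1) ∘ (1 ⊗ μ ⊗ 1) ∘ (τ̄_V ⊗ τ_W) : V ⊗ W ⟶ V ⊗ W`. -/
def sIdem {L : C} (μ : L ⊗ L ⟶ L) (ε : L ⟶ 𝟙_ C) {V W : C}
    (τbV : V ⟶ V ⊗ L) (τW : W ⟶ L ⊗ W) : V ⊗ W ⟶ V ⊗ W :=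
  (τbV ▷ W) ≫ ((V ⊗ L) ◁ τW) ≫ (α_ V L (L ⊗ W)).hom ≫ (V ◁ (α_ L L W).inv) ≫
    (V ◁ (μ ▷ W)) ≫ (V ◁ (ε ▷ W)) ≫ (V ◁ (λ_ W).hom)

/-- `(v ⊗ w) ∘ (1 ⊗ c ⊗ 1) : (A ⊗ A) ⊗ (V ⊗ W) ⟶ V ⊗ W`, where the middle braiding
`c : A ⊗ V ⟶ V ⊗ A` interchanges the second `A` factor with `V`. -/
def actPair {A V W : C} (v : A ⊗ V ⟶ V) (w : A ⊗ W ⟶ W) :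
    (A ⊗ A) ⊗ (V ⊗ W) ⟶ V ⊗ W :=
  (α_ A A (V ⊗ W)).hom ≫ (A ◁ (α_ A V W).inv) ≫ (A ◁ ((β_ A V).hom ▷ W)) ≫
    (A ◁ (α_ V A W).hom) ≫ (α_ A V (A ⊗ W)).inv ≫ (v ▷ (A ⊗ W)) ≫ (V ◁ w)

/-- `d₁ := (m ⊗ 1) ∘ (1 ⊗ c) ∘ (t₁ ⊗ 1) ∘ (1 ⊗ c⁻¹) : A ⊗ A ⊗ A ⟶ A ⊗ A`. -/
def dOne {A : C} (m : A ⊗ A ⟶ A) (t₁ : A ⊗ A ⟶ A ⊗ A) : A ⊗ (A ⊗ A) ⟶ A ⊗ A :=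
  (A ◁ (β_ A A).inv) ≫ wl t₁ ≫ (A ◁ (β_ A A).hom) ≫ ml m

/-- `d₂ := (1 ⊗ m) ∘ (c ⊗ 1) ∘ (1 ⊗ t₂) ∘ (c⁻¹ ⊗ 1) : A ⊗ A ⊗ A ⟶ A ⊗ A`. -/
def dTwo {A : C} (m : A ⊗ A ⟶ A) (t₂ : A ⊗ A ⟶ A ⊗ A) : A ⊗ (A ⊗ A) ⟶ A ⊗ A :=
  wl (β_ A A).inv ≫ (A ◁ t₂) ≫ wl (β_ A A).hom ≫ (A ◁ m)

/-!
The pairing `P := (v ⊗ w) ∘ (1 ⊗ c ⊗ 1) : (A ⊗ A) ⊗ (V ⊗ W) ⟶ V ⊗ W` transports structure on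
`A ⊗ A` to `V ⊗ W`: the idempotent `e₁` becomes `s` and `d₁` becomes `b⁰`. Since `P` is a regular
epimorphism, every identity between `d₁` and `e₁` descends to one between `b⁰` and `s`; so `b⁰` is
associative and absorbs `s` on both sides, which makes `ŝ ∘ b⁰ ∘ (1 ⊗ š)` an associative action on
`V ∘ W`. Precomposed with an epimorphism, this action is a composite of `d̂₁` and a quotient of `P`,
hence it is a regular epimorphism. For non-degeneracy, `P` is itself non-degenerate and satisfies
`P ∘ (d₂ ⊗ 1) = P ∘ (1 ⊗ b⁰)` and `P ∘ (e₂ ⊗ 1) = P ∘ (1 ⊗ s)`. So two morphisms fixed by `s` which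
agree under `b⁰` also agree under `P` after precomposing with `d̂₂`, an epimorphism.

The identification of `s` for `V = W = A` with `e₁` is where the base object enters; it rests on the
multiplication of `A ⊗ A` being non-degenerate, through which `e₁` commutes with right
multiplications because `e₁` and `e₂` are compatible.
-/

/-! ### Morphisms acting on two legs of a triple tensor product -/

/-- `f ⊗ 1` in right-nested bracketing, usually written `f₁₂`; `wl f` is the case `B = A`. -/
def leg12 {X X' Z Z' : C} (B : C) (f : X ⊗ Z ⟶ X' ⊗ Z') : X ⊗ (Z ⊗ B) ⟶ X' ⊗ (Z' ⊗ B) :=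
  (α_ X Z B).inv ≫ f ▷ B ≫ (α_ X' Z' B).hom

/-- `(1 ⊗ c) ∘ (f ⊗ 1) ∘ (1 ⊗ c⁻¹)`, usually written `f₁₃`: the morphism `f` acts on the outer
two legs, the last leg passing the middle one by the braiding. -/
def leg13 {X X' Z Z' : C} (D : C) (f : X ⊗ Z ⟶ X' ⊗ Z') : X ⊗ (D ⊗ Z) ⟶ X' ⊗ (D ⊗ Z') :=
  X ◁ (β_ Z D).inv ≫ leg12 D f ≫ X' ◁ (β_ Z' D).hom

section Legs

variable {X X' X'' Z Z' Z'' : C} (D : C)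

theorem leg13_eq_conj_braiding_fst (f : X ⊗ Z ⟶ X' ⊗ Z') :
    leg13 D f = (α_ X D Z).inv ≫ (β_ X D).hom ▷ Z ≫ (α_ D X Z).hom ≫ D ◁ f ≫
      (α_ D X' Z').inv ≫ (β_ X' D).inv ▷ Z' ≫ (α_ X' D Z').hom := by
  have h := BraidedCategory.braiding_naturality_left f D
  simp only [BraidedCategory.braiding_tensor_left_hom, assoc] at h
  have passes : f ▷ D ≫ (α_ X' Z' D).hom ≫ X' ◁ (β_ Z' D).hom =
      ((α_ X Z D).hom ≫ X ◁ (β_ Z D).hom ≫ (α_ X D Z).inv ≫ (β_ X D).hom ▷ Z ≫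
        (α_ D X Z).hom) ≫ D ◁ f ≫ (α_ D X' Z').inv ≫ (β_ X' D).inv ▷ Z' ≫
        (α_ X' D Z').hom := by
    simp only [assoc]
    rw [← reassoc_of% h]; simp
  simp only [leg13, leg12, assoc]
  rw [passes]; simp

theorem leg13_comp (f : X ⊗ Z ⟶ X' ⊗ Z') (g : X' ⊗ Z' ⟶ X'' ⊗ Z'') :
    leg13 D (f ≫ g) = leg13 D f ≫ leg13 D g := by
  simp [leg13, leg12]

theorem leg13_whiskerLeft (g : Z ⟶ Z') : leg13 D (X ◁ g) = X ◁ D ◁ g := by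
  rw [leg13_eq_conj_braiding_fst]
  calc _ = 𝟙 _ ⊗≫ ((β_ X D).hom ▷ Z ≫ (D ⊗ X) ◁ g) ⊗≫ (β_ X D).inv ▷ Z' ⊗≫ 𝟙 _ := by monoidal
    _ = 𝟙 _ ⊗≫ X ◁ D ◁ g ⊗≫ ((β_ X D).hom ≫ (β_ X D).inv) ▷ Z' ⊗≫ 𝟙 _ := by
      rw [← whisker_exchange]; monoidal
    _ = _ := by rw [Iso.hom_inv_id]; monoidal

theorem leg13_leg12 (B : C) (f : X ⊗ Z ⟶ X' ⊗ Z') :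
    leg13 D (leg12 B f) =
      X ◁ (α_ D Z B).inv ≫ leg12 B (leg13 D f) ≫ X' ◁ (α_ D Z' B).hom := by
  simp only [leg13_eq_conj_braiding_fst, leg12]
  monoidal

theorem leg13_leg13 (B : C) (f : X ⊗ Z ⟶ X' ⊗ Z') :
    leg13 D (leg13 B f) = X ◁ (D ◁ (β_ Z B).inv ≫ (α_ D Z B).inv) ≫ leg12 B (leg13 D f) ≫
      X' ◁ ((α_ D Z' B).hom ≫ D ◁ (β_ Z' B).hom) := by
  rw [show leg13 B f = X ◁ (β_ Z B).inv ≫ leg12 B f ≫ X' ◁ (β_ Z' B).hom from rfl,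
    leg13_comp, leg13_comp, leg13_leg12, leg13_whiskerLeft, leg13_whiskerLeft]
  simp only [whiskerLeft_comp, assoc]

end Legs

/-! ### Factorwise pairings -/

/-- The pairing of `X₁ ⊗ X₂` with `Y₁ ⊗ Y₂` which pairs the corresponding factors; it is
`(x ⊗ y) ∘ (1 ⊗ c ⊗ 1)`. -/
def tensorPairing {X₁ X₂ Y₁ Y₂ Z₁ Z₂ : C} (x : X₁ ⊗ Y₁ ⟶ Z₁) (y : X₂ ⊗ Y₂ ⟶ Z₂) :
    (X₁ ⊗ X₂) ⊗ (Y₁ ⊗ Y₂) ⟶ Z₁ ⊗ Z₂ :=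
  tensorμ X₁ X₂ Y₁ Y₂ ≫ (x ⊗ₘ y)

theorem actPair_eq_tensorPairing {A V W : C} (v : A ⊗ V ⟶ V) (w : A ⊗ W ⟶ W) :
    actPair v w = tensorPairing v w := by
  simp [actPair, tensorPairing, tensorμ, MonoidalCategory.tensorHom_def]

theorem tensorPairing_assoc {X₁ X₂ Y₁ Y₂ Z₁ Z₂ U₁ U₂ T₁ T₂ R₁ R₂ : C}
    {f₁ : X₁ ⊗ Y₁ ⟶ U₁} {g₁ : U₁ ⊗ Z₁ ⟶ T₁} {h₁ : Y₁ ⊗ Z₁ ⟶ R₁} {k₁ : X₁ ⊗ R₁ ⟶ T₁}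
    {f₂ : X₂ ⊗ Y₂ ⟶ U₂} {g₂ : U₂ ⊗ Z₂ ⟶ T₂} {h₂ : Y₂ ⊗ Z₂ ⟶ R₂} {k₂ : X₂ ⊗ R₂ ⟶ T₂}
    (w₁ : f₁ ▷ Z₁ ≫ g₁ = (α_ _ _ _).hom ≫ X₁ ◁ h₁ ≫ k₁)
    (w₂ : f₂ ▷ Z₂ ≫ g₂ = (α_ _ _ _).hom ≫ X₂ ◁ h₂ ≫ k₂) :
    tensorPairing f₁ f₂ ▷ (Z₁ ⊗ Z₂) ≫ tensorPairing g₁ g₂ =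
      (α_ _ _ _).hom ≫ (X₁ ⊗ X₂) ◁ tensorPairing h₁ h₂ ≫ tensorPairing k₁ k₂ := by
  simp only [tensorPairing, comp_whiskerRight, whiskerLeft_comp, assoc]
  rw [tensorμ_natural_left_assoc, tensorμ_natural_right_assoc, tensorHom_comp_tensorHom,
    tensorHom_comp_tensorHom, w₁, w₂, ← tensor_associativity_assoc, tensorHom_comp_tensorHom]

theorem tensorPairing_comp_tensorHom {A B V W V' W' : C} {v : A ⊗ V ⟶ V} {w : B ⊗ W ⟶ W}
    {v' : A ⊗ V' ⟶ V'} {w' : B ⊗ W' ⟶ W'} {f : V ⟶ V'} {g : W ⟶ W'}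
    (hf : v ≫ f = A ◁ f ≫ v') (hg : w ≫ g = B ◁ g ≫ w') :
    tensorPairing v w ≫ (f ⊗ₘ g) = (A ⊗ B) ◁ (f ⊗ₘ g) ≫ tensorPairing v' w' := by
  simp only [tensorPairing, assoc]
  rw [tensorμ_natural_right_assoc, tensorHom_comp_tensorHom, tensorHom_comp_tensorHom, hf, hg]

/-! ### Non-degeneracy -/

section Nondegenerate

variable {D : Type u} [Category.{v} D] [MonoidalCategory D] {X Y Y' Z V W : D} {v : Z ⊗ V ⟶ W}

theorem NdLeftOn.mono {𝒯 𝒴 : Set D} (hv : NdLeftOn v 𝒴) (h : 𝒯 ⊆ 𝒴) : NdLeftOn v 𝒯 :=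
  fun X Y hY => hv X Y (h hY)

theorem NdLeftOn.singleton_of_mem {𝒴 : Set D} (hv : NdLeftOn v 𝒴) (hY : Y ∈ 𝒴) :
    NdLeftOn v {Y} :=
  hv.mono (Set.singleton_subset_iff.mpr hY)

theorem NdLeftOn.eq_of_eq (hv : NdLeftOn v {Y}) {g g' : X ⟶ V ⊗ Y}
    (h : Z ◁ g ≫ (α_ Z V Y).inv ≫ v ▷ Y = Z ◁ g' ≫ (α_ Z V Y).inv ≫ v ▷ Y) : g = g' :=
  hv X Y rfl h

theorem NdLeftOn.of_iso (e : Y ≅ Y') (hv : NdLeftOn v {Y}) : NdLeftOn v {Y'} := by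
  rintro X Y' rfl g g' h
  have conj (g : X ⟶ V ⊗ Y') : Z ◁ (g ≫ V ◁ e.inv) ≫ (α_ Z V Y).inv ≫ v ▷ Y =
      (Z ◁ g ≫ (α_ Z V Y').inv ≫ v ▷ Y') ≫ W ◁ e.inv := by
    rw [whiskerLeft_comp, assoc, associator_inv_naturality_right_assoc, whisker_exchange]; simp
  have := hv.eq_of_eq ((conj g).trans ((congrArg (· ≫ W ◁ e.inv) h).trans (conj g').symm))
  simpa only [cancel_mono] using this

theorem NdLeftOn.eq_of_whiskerLeft_comp_eq (hv : NdLeftOn v {𝟙_ D}) {g g' : X ⟶ V}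
    (h : Z ◁ g ≫ v = Z ◁ g' ≫ v) : g = g' := by
  have unit (g : X ⟶ V) : Z ◁ (g ≫ (ρ_ V).inv) ≫ (α_ Z V (𝟙_ D)).inv ≫ v ▷ 𝟙_ D =
      (Z ◁ g ≫ v) ≫ (ρ_ W).inv := by
    simp
  simpa using hv.eq_of_eq ((unit g).trans ((congrArg (· ≫ (ρ_ W).inv) h).trans (unit g').symm))

end Nondegenerate

theorem NdRightOn.eq_of_whiskerRight_comp_eq {X Y Z V W : C} {m : Z ⊗ V ⟶ W}
    (hm : NdRightOn m {Y}) {g g' : X ⟶ Y ⊗ Z}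
    (h : g ▷ V ≫ (α_ Y Z V).hom ≫ Y ◁ m = g' ▷ V ≫ (α_ Y Z V).hom ≫ Y ◁ m) : g = g' := by
  have conj (g : X ⟶ Y ⊗ Z) :
      V ◁ (g ≫ (β_ Z Y).inv) ≫ (α_ V Z Y).inv ≫ ((β_ V Z).hom ≫ m) ▷ Y =
        (β_ V X).hom ≫ (g ▷ V ≫ (α_ Y Z V).hom ≫ Y ◁ m) ≫ (β_ W Y).inv := by
    rw [← cancel_mono (β_ W Y).hom]
    simp only [assoc, comp_whiskerRight, Iso.inv_hom_id, comp_id]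
    rw [← BraidedCategory.braiding_naturality_right_assoc,
      BraidedCategory.braiding_naturality_left,
      reassoc_of% BraidedCategory.braiding_naturality_left (β_ V Z).hom Y]
    simp [BraidedCategory.braiding_tensor_left_hom, BraidedCategory.braiding_tensor_right_hom]
  have := NdLeftOn.eq_of_eq hm ((conj g).trans
    ((congrArg (fun k => (β_ V X).hom ≫ k ≫ (β_ W Y).inv) h).trans (conj g').symm))
  simpa only [cancel_mono] using this

section PairingNondegenerate

variable {A B V V' W W' X Y : C} {v : A ⊗ V ⟶ V'} {w : B ⊗ W ⟶ W'}

/-- What remains of `tensorPairing v w` applied to `g : X ⟶ (V ⊗ W) ⊗ Y` before `v` is applied. -/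
def pairSnd (V : C) (w : B ⊗ W ⟶ W') (g : X ⟶ (V ⊗ W) ⊗ Y) : B ⊗ X ⟶ V ⊗ (W' ⊗ Y) :=
  B ◁ (g ≫ (α_ V W Y).hom) ≫ (α_ B V (W ⊗ Y)).inv ≫ (β_ B V).hom ▷ (W ⊗ Y) ≫
    (α_ V B (W ⊗ Y)).hom ≫ V ◁ ((α_ B W Y).inv ≫ w ▷ Y)

theorem whiskerLeft_comp_tensorPairing (g : X ⟶ (V ⊗ W) ⊗ Y) :
    (A ⊗ B) ◁ g ≫ (α_ _ _ _).inv ≫ tensorPairing v w ▷ Y =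
      (α_ A B X).hom ≫ (A ◁ pairSnd V w g ≫ (α_ A V (W' ⊗ Y)).inv ≫ v ▷ (W' ⊗ Y)) ≫
        (α_ V' W' Y).inv := by
  simp only [tensorPairing, tensorμ, tensorHom_def', pairSnd]
  monoidal

theorem pairSnd_comp_braiding_inv (g : X ⟶ (V ⊗ W) ⊗ Y) :
    pairSnd V w g ≫ (β_ (W' ⊗ Y) V).inv ≫ (α_ W' Y V).hom =
      B ◁ (g ≫ (α_ V W Y).hom ≫ (β_ (W ⊗ Y) V).inv ≫ (α_ W Y V).hom) ≫
        (α_ B W (Y ⊗ V)).inv ≫ w ▷ (Y ⊗ V) := by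
  have hexagon : (β_ B V).hom ▷ (W ⊗ Y) ≫ (α_ V B (W ⊗ Y)).hom ≫ (β_ (B ⊗ (W ⊗ Y)) V).inv =
      (α_ B V (W ⊗ Y)).hom ≫ B ◁ (β_ (W ⊗ Y) V).inv ≫ (α_ B (W ⊗ Y) V).inv := by
    rw [BraidedCategory.braiding_tensor_left_inv]; simp
  simp only [pairSnd, assoc]
  rw [BraidedCategory.braiding_inv_naturality_right_assoc, reassoc_of% hexagon]
  simp

theorem NdLeftOn.tensorPairing (hv : NdLeftOn v {W' ⊗ Y}) (hw : NdLeftOn w {Y ⊗ V}) :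
    NdLeftOn (tensorPairing v w) {Y} := by
  rintro X _ rfl g g' h
  have snd_eq : pairSnd V w g = pairSnd V w g' := by
    apply hv.eq_of_eq
    simpa only [whiskerLeft_comp_tensorPairing, cancel_epi, cancel_mono] using h
  have := hw.eq_of_eq ((pairSnd_comp_braiding_inv g).symm.trans
    ((congrArg (· ≫ _) snd_eq).trans (pairSnd_comp_braiding_inv g')))
  simpa only [cancel_mono] using this

end PairingNondegenerate

/-! ### The canonical idempotent -/

section Contract

variable {D : Type u} [Category.{v} D] [MonoidalCategory D]

/-- `(κ ⊗ 1) ∘ (1 ⊗ τ)`: a functional `κ` on `L ⊗ L` turns a coaction `τ` into an action of `L`. -/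
def contract {L W : D} (κ : L ⊗ L ⟶ 𝟙_ D) (τ : W ⟶ L ⊗ W) : L ⊗ W ⟶ W :=
  L ◁ τ ≫ (α_ L L W).inv ≫ κ ▷ W ≫ (λ_ W).hom

theorem sIdem_eq_contract {L V W : D} (μ : L ⊗ L ⟶ L) (ε : L ⟶ 𝟙_ D) (τb : V ⟶ V ⊗ L)
    (τ : W ⟶ L ⊗ W) :
    sIdem μ ε τb τ = τb ▷ W ≫ (α_ V L W).hom ≫ V ◁ contract (μ ≫ ε) τ := by
  simp only [sIdem, contract]
  monoidal

theorem whiskerLeft_comp_contract {A L W : D} (κ : L ⊗ L ⟶ 𝟙_ D) {w : A ⊗ W ⟶ W}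
    {τ : A ⟶ L ⊗ A} {τW : W ⟶ L ⊗ W} (h : w ≫ τW = τ ▷ W ≫ (α_ L A W).hom ≫ L ◁ w) :
    L ◁ w ≫ contract κ τW = (α_ L A W).inv ≫ contract κ τ ▷ W ≫ w := by
  calc _ = L ◁ (w ≫ τW) ≫ (α_ L L W).inv ≫ κ ▷ W ≫ (λ_ W).hom := by simp [contract]
    _ = L ◁ (τ ▷ W ≫ (α_ L A W).hom) ⊗≫ ((L ⊗ L) ◁ w ≫ κ ▷ W) ⊗≫ 𝟙 _ := by rw [h]; monoidal
    _ = _ := by rw [whisker_exchange, contract]; monoidal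

end Contract

theorem tensorPairing_comp_sIdem {A L V W : C} {μ : L ⊗ L ⟶ L} {ε : L ⟶ 𝟙_ C} {v : A ⊗ V ⟶ V}
    {w : A ⊗ W ⟶ W} {τbar : A ⟶ A ⊗ L} {τ : A ⟶ L ⊗ A} {τbV : V ⟶ V ⊗ L} {τW : W ⟶ L ⊗ W}
    (hτbV : v ≫ τbV = τbar ▷ V ≫ (α_ A L V).hom ≫ A ◁ (β_ L V).hom ≫ (α_ A V L).inv ≫ v ▷ L)
    (hτW : w ≫ τW = τ ▷ W ≫ (α_ L A W).hom ≫ L ◁ w) :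
    tensorPairing v w ≫ sIdem μ ε τbV τW =
      sIdem μ ε τbar τ ▷ (V ⊗ W) ≫ tensorPairing v w := by
  rw [sIdem_eq_contract, sIdem_eq_contract]
  set κ := μ ≫ ε
  calc _ = tensorμ A A V W ≫ (v ≫ τbV) ▷ (A ⊗ W) ⊗≫ V ◁ (L ◁ w ≫ contract κ τW) := by
        rw [tensorPairing, MonoidalCategory.tensorHom_def, assoc, assoc, whisker_exchange_assoc]
        monoidal
    _ = 𝟙 _ ⊗≫ A ◁ (β_ A V).hom ▷ W ⊗≫ τbar ▷ (V ⊗ A ⊗ W) ⊗≫ A ◁ (β_ L V).hom ▷ (A ⊗ W) ⊗≫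
          (v ▷ (L ⊗ A ⊗ W) ≫ V ◁ ((α_ L A W).inv ≫ contract κ τ ▷ W)) ⊗≫ V ◁ w := by
        rw [hτbV, whiskerLeft_comp_contract κ hτW, tensorμ]; monoidal
    _ = 𝟙 _ ⊗≫ (A ◁ (β_ A V).hom ≫ τbar ▷ (V ⊗ A)) ▷ W ⊗≫
          A ◁ ((β_ L V).hom ▷ A ⊗≫ V ◁ contract κ τ) ▷ W ⊗≫ v ▷ (A ⊗ W) ⊗≫ V ◁ w := by
        rw [← whisker_exchange]; monoidal
    _ = 𝟙 _ ⊗≫ τbar ▷ (A ⊗ V ⊗ W) ⊗≫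
          A ◁ ((α_ L A V).inv ≫ (β_ (L ⊗ A) V).hom ≫ V ◁ contract κ τ) ▷ W ⊗≫
          v ▷ (A ⊗ W) ⊗≫ V ◁ w := by
        rw [whisker_exchange, BraidedCategory.braiding_tensor_left_hom]; monoidal
    _ = _ := by
        rw [← BraidedCategory.braiding_naturality_left, tensorPairing, tensorμ,
          MonoidalCategory.tensorHom_def]
        monoidal

/-! ### Regular weak multiplier bimonoids -/

namespace RWMB

variable {A : C} {𝒴 : Set C} (S : RWMB A 𝒴)

theorem whiskerLeft_t₁_comp_leg13_t₁ :
    A ◁ S.t₁ ≫ leg13 A S.t₁ ≫ wl S.t₁ = wl S.t₁ ≫ A ◁ S.t₁ := by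
  simpa [leg13_eq_conj_braiding_fst, wl] using S.ax1

theorem wl_t₁_comp_whiskerLeft_e₁ : wl S.t₁ ≫ A ◁ S.e₁ = leg13 A S.e₁ ≫ wl S.t₁ := by
  simpa [leg13, leg12, wl] using S.ax6

theorem dOne_eq_leg13 : dOne S.m S.t₁ = leg13 A S.t₁ ≫ ml S.m := by
  simp [dOne, leg13, leg12, wl]

theorem wl_t₁_comp_j : wl S.t₁ ≫ S.j ▷ (A ⊗ A) ≫ (λ_ (A ⊗ A)).hom = ml S.m := by
  simp [wl, ml, S.hm₁]

theorem whiskerLeft_t₁_comp_dOne : A ◁ S.t₁ ≫ dOne S.m S.t₁ = ml S.m ≫ S.t₁ := by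
  calc _ = (A ◁ S.t₁ ≫ leg13 A S.t₁ ≫ wl S.t₁) ≫ S.j ▷ (A ⊗ A) ≫ (λ_ (A ⊗ A)).hom := by
        simp only [dOne_eq_leg13, ← wl_t₁_comp_j, assoc]
    _ = (wl S.t₁ ≫ S.j ▷ (A ⊗ A) ≫ (λ_ (A ⊗ A)).hom) ≫ S.t₁ := by
        rw [whiskerLeft_t₁_comp_leg13_t₁, assoc, whisker_exchange_assoc]; simp
    _ = _ := by rw [wl_t₁_comp_j]

theorem dOne_comp_j : dOne S.m S.t₁ ≫ S.j ▷ A ≫ (λ_ A).hom = A ◁ S.piL1 ≫ S.m := by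
  have h := A ◁ (β_ A A).inv ≫= S.ax8
  simp only [← whiskerLeft_comp_assoc] at h
  simpa [dOne, piL1] using h

theorem m_assoc : S.m ▷ A ≫ S.m = (α_ A A A).hom ≫ A ◁ S.m ≫ S.m := by
  have h := S.whiskerLeft_t₁_comp_dOne =≫ (S.j ▷ A ≫ (λ_ A).hom)
  simp only [assoc, dOne_comp_j, ← S.hm₁] at h
  rw [← whiskerLeft_comp_assoc, piL1, reassoc_of% S.ax3, ← S.hm₁] at h
  simp [h, ml]

/-- The factorwise multiplication of `A ⊗ A`. -/
def mulSq : (A ⊗ A) ⊗ (A ⊗ A) ⟶ A ⊗ A := tensorPairing S.m S.m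

theorem whiskerLeft_e₁_comp_mulSq :
    (A ⊗ A) ◁ S.e₁ ≫ S.mulSq = S.e₂ ▷ (A ⊗ A) ≫ S.mulSq := by
  simpa [midSw, mulSq, tensorPairing, tensorμ, MonoidalCategory.tensorHom_def] using S.hecomp

theorem mulSq_ndLeftOn : NdLeftOn S.mulSq {𝟙_ C} := by
  have hm := S.ndl.singleton_of_mem S.memA
  exact (hm.of_iso (ρ_ A).symm).tensorPairing (hm.of_iso (λ_ A).symm)

/-- Right multiplication on the first factor, `(m ⊗ 1) ∘ (1 ⊗ c)`. -/
def rightMulFst : (A ⊗ A) ⊗ A ⟶ A ⊗ A :=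
  (α_ A A A).hom ≫ A ◁ (β_ A A).hom ≫ (α_ A A A).inv ≫ S.m ▷ A

/-- Right multiplication on the second factor, `1 ⊗ m`. -/
def rightMulSnd : (A ⊗ A) ⊗ A ⟶ A ⊗ A := (α_ A A A).hom ≫ A ◁ S.m

theorem rightMulFst_eq_tensorPairing :
    S.rightMulFst = (A ⊗ A) ◁ (ρ_ A).inv ≫ tensorPairing S.m (ρ_ A).hom := by
  have h := BraidedCategory.braiding_naturality_right A (ρ_ A).hom
  rw [BraidedCategory.braiding_tensor_right_hom A A (𝟙_ C)] at h
  have passes : (A ⊗ A) ◁ (ρ_ A).hom ≫ (α_ A A A).hom ≫ A ◁ (β_ A A).hom =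
      (α_ A A _).hom ≫ A ◁ (A ◁ (ρ_ A).hom ≫ (β_ A A).hom) := by simp
  simp only [rightMulFst, tensorPairing, tensorμ, tensorHom_def', assoc]
  rw [← cancel_epi ((A ⊗ A) ◁ (ρ_ A).hom), reassoc_of% passes, h]
  simp only [whiskerLeft_comp, assoc, braiding_tensorUnit_right]
  monoidal

theorem rightMulSnd_eq_tensorPairing :
    S.rightMulSnd = (A ⊗ A) ◁ (λ_ A).inv ≫ tensorPairing (ρ_ A).hom S.m := by
  simp only [rightMulSnd, tensorPairing, tensorμ, tensorHom_def', assoc,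
    braiding_tensorUnit_right]
  monoidal

theorem whiskerLeft_rightMulFst_comp_mulSq :
    (A ⊗ A) ◁ S.rightMulFst ≫ S.mulSq = (α_ _ _ _).inv ≫ S.mulSq ▷ A ≫ S.rightMulFst := by
  have h := tensorPairing_assoc (f₂ := S.m) (g₂ := (ρ_ A).hom) (h₂ := (ρ_ A).hom) (k₂ := S.m)
    S.m_assoc (by monoidal)
  rw [rightMulFst_eq_tensorPairing, mulSq, whiskerLeft_comp, assoc, ← whisker_exchange_assoc, h]
  monoidal

theorem whiskerLeft_rightMulSnd_comp_mulSq :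
    (A ⊗ A) ◁ S.rightMulSnd ≫ S.mulSq = (α_ _ _ _).inv ≫ S.mulSq ▷ A ≫ S.rightMulSnd := by
  have h := tensorPairing_assoc (f₁ := S.m) (g₁ := (ρ_ A).hom) (h₁ := (ρ_ A).hom) (k₁ := S.m)
    (by monoidal) S.m_assoc
  rw [rightMulSnd_eq_tensorPairing, mulSq, whiskerLeft_comp, assoc, ← whisker_exchange_assoc, h]
  monoidal

/-- The compatibility of `e₁` with `e₂` turns `e₁` into a right multiplier of `mulSq`. -/
theorem comp_e₁_of_mulSq_linear {B : C} {r : (A ⊗ A) ⊗ B ⟶ A ⊗ A}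
    (hr : (A ⊗ A) ◁ r ≫ S.mulSq = (α_ _ _ _).inv ≫ S.mulSq ▷ B ≫ r) :
    r ≫ S.e₁ = S.e₁ ▷ B ≫ r := by
  apply S.mulSq_ndLeftOn.eq_of_whiskerLeft_comp_eq
  calc _ = S.e₂ ▷ ((A ⊗ A) ⊗ B) ≫ (α_ _ _ _).inv ≫ S.mulSq ▷ B ≫ r := by
        rw [whiskerLeft_comp, assoc, whiskerLeft_e₁_comp_mulSq, whisker_exchange_assoc, hr]
    _ = (α_ _ _ _).inv ≫ (S.e₂ ▷ (A ⊗ A) ≫ S.mulSq) ▷ B ≫ r := by simp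
    _ = (A ⊗ A) ◁ S.e₁ ▷ B ≫ (α_ _ _ _).inv ≫ S.mulSq ▷ B ≫ r := by
        rw [← whiskerLeft_e₁_comp_mulSq]; simp
    _ = _ := by rw [whiskerLeft_comp, assoc, hr]

theorem rightMulFst_comp_e₁ : S.rightMulFst ≫ S.e₁ = S.e₁ ▷ A ≫ S.rightMulFst :=
  S.comp_e₁_of_mulSq_linear S.whiskerLeft_rightMulFst_comp_mulSq

theorem rightMulSnd_comp_e₁ : S.rightMulSnd ≫ S.e₁ = S.e₁ ▷ A ≫ S.rightMulSnd :=
  S.comp_e₁_of_mulSq_linear S.whiskerLeft_rightMulSnd_comp_mulSq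

theorem dOne_eq_rightMulFst :
    dOne S.m S.t₁ = A ◁ (β_ A A).inv ≫ (α_ A A A).inv ≫ S.t₁ ▷ A ≫ S.rightMulFst := by
  simp [dOne, rightMulFst, wl, ml]

theorem dOne_comp_e₁ : dOne S.m S.t₁ ≫ S.e₁ = dOne S.m S.t₁ := by
  simp only [dOne_eq_rightMulFst, assoc, S.rightMulFst_comp_e₁]
  rw [← comp_whiskerRight_assoc, S.ax3]

theorem leg13_e₁_comp_ml : leg13 A S.e₁ ≫ ml S.m = ml S.m ≫ S.e₁ := by
  calc _ = A ◁ (β_ A A).inv ≫ (α_ _ _ _).inv ≫ S.e₁ ▷ A ≫ S.rightMulFst := by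
        simp [leg13, leg12, ml, rightMulFst]
    _ = _ := by rw [← rightMulFst_comp_e₁]; simp [rightMulFst, ml]

/-- `t₄ ∘ c`, the morphism through which `t₄` enters the coaction `τ̄`. -/
def braidT₄ : A ⊗ A ⟶ A ⊗ A := (β_ A A).hom ≫ S.t₄

theorem braidT₄_comp_j : S.braidT₄ ≫ A ◁ S.j ≫ (ρ_ A).hom = S.m := by
  rw [braidT₄, S.hm₄, assoc]

theorem whiskerLeft_t₁_comp_braiding_inv_comp_m :
    A ◁ S.t₁ ≫ wl (β_ A A).inv ≫ ml S.m = wl S.t₄ ≫ A ◁ S.m := by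
  have t₄_j : (β_ A A).inv ≫ S.m = S.t₄ ≫ A ◁ S.j ≫ (ρ_ A).hom := by
    rw [← braidT₄_comp_j, braidT₄]; simp
  calc _ = A ◁ S.t₁ ≫ (α_ _ _ _).inv ≫ (S.t₄ ≫ A ◁ S.j ≫ (ρ_ A).hom) ▷ A := by
        rw [← t₄_j]; simp [wl, ml]
    _ = (A ◁ S.t₁ ≫ wl S.t₄) ≫ A ◁ (S.j ▷ A ≫ (λ_ A).hom) := by rw [wl]; monoidal
    _ = wl S.t₄ ≫ A ◁ (S.t₁ ≫ S.j ▷ A ≫ (λ_ A).hom) := by rw [S.hi41]; simp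
    _ = _ := by rw [← S.hm₁]

theorem wl_braidT₄_comp_m : wl S.braidT₄ ≫ A ◁ S.m = dOne S.m S.t₁ := by
  have h := S.whiskerLeft_t₁_comp_braiding_inv_comp_m
  simp only [wl, ml, assoc, Iso.hom_inv_id_assoc] at h
  simp [dOne_eq_leg13, leg13_eq_conj_braiding_fst, ml, h, wl, braidT₄]

theorem wl_braidT₄_comp_rightMulFst :
    wl S.braidT₄ ▷ A ≫ (α_ _ _ _).hom ≫ A ◁ S.rightMulFst =
      𝟙 _ ⊗≫ (A ⊗ A) ◁ (β_ A A).hom ⊗≫ dOne S.m S.t₁ ▷ A ⊗≫ 𝟙 _ := by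
  calc _ = 𝟙 _ ⊗≫ (S.braidT₄ ▷ (A ⊗ A) ≫ (A ⊗ A) ◁ (β_ A A).hom) ⊗≫ A ◁ S.m ▷ A ⊗≫ 𝟙 _ := by
        rw [rightMulFst, wl]; monoidal
    _ = 𝟙 _ ⊗≫ (A ⊗ A) ◁ (β_ A A).hom ⊗≫ (wl S.braidT₄ ≫ A ◁ S.m) ▷ A ⊗≫ 𝟙 _ := by
        rw [← whisker_exchange, wl]; monoidal
    _ = _ := by rw [wl_braidT₄_comp_m]

theorem rightMulFst_comp_braiding_inv :
    S.rightMulFst ≫ (β_ A A).inv = (β_ A A).inv ▷ A ≫ (α_ _ _ _).hom ≫ A ◁ S.m := by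
  simp only [rightMulFst, assoc]
  rw [BraidedCategory.braiding_inv_naturality_left, BraidedCategory.braiding_tensor_right_inv]
  simp

theorem eq_of_comp_rightMulFst {X : C} {g g' : X ⟶ A ⊗ (A ⊗ A)}
    (h : g ▷ A ≫ (α_ _ _ _).hom ≫ A ◁ S.rightMulFst =
      g' ▷ A ≫ (α_ _ _ _).hom ≫ A ◁ S.rightMulFst) : g = g' := by
  have conj (g : X ⟶ A ⊗ (A ⊗ A)) :
      (g ≫ A ◁ (β_ A A).inv ≫ (α_ _ _ _).inv) ▷ A ≫ (α_ _ _ _).hom ≫ (A ⊗ A) ◁ S.m =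
        (g ▷ A ≫ (α_ _ _ _).hom ≫ A ◁ S.rightMulFst) ≫ A ◁ (β_ A A).inv ≫ (α_ _ _ _).inv := by
    simp only [assoc]
    rw [← whiskerLeft_comp_assoc, rightMulFst_comp_braiding_inv]
    simp
  have hm : NdRightOn S.m {A ⊗ A} := NdLeftOn.singleton_of_mem S.ndr S.memAA
  simpa only [cancel_mono] using hm.eq_of_whiskerRight_comp_eq
    ((conj g).trans ((congrArg (· ≫ _) h).trans (conj g').symm))

theorem dOne_whiskerRight_comp_e₁ :
    dOne S.m S.t₁ ▷ A ≫ (α_ _ _ _).hom ≫ A ◁ S.e₁ =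
      𝟙 _ ⊗≫ leg13 A (leg13 A S.e₁) ⊗≫ dOne S.m S.t₁ ▷ A ⊗≫ 𝟙 _ := by
  have dOne_whiskerRight :
      dOne S.m S.t₁ ▷ A = 𝟙 _ ⊗≫ leg13 A (wl S.t₁) ⊗≫ S.m ▷ (A ⊗ A) ⊗≫ 𝟙 _ := by
    rw [dOne_eq_leg13, show wl S.t₁ = leg12 A S.t₁ from rfl, leg13_leg12, leg12, ml]
    monoidal
  rw [dOne_whiskerRight]
  calc _ = 𝟙 _ ⊗≫ leg13 A (wl S.t₁) ⊗≫ (S.m ▷ (A ⊗ A) ≫ A ◁ S.e₁) := by monoidal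
    _ = 𝟙 _ ⊗≫ (leg13 A (wl S.t₁) ≫ A ◁ A ◁ S.e₁) ⊗≫ S.m ▷ (A ⊗ A) := by
        rw [← whisker_exchange]; monoidal
    _ = _ := by
        rw [← leg13_whiskerLeft, ← leg13_comp, wl_t₁_comp_whiskerLeft_e₁, leg13_comp]; monoidal

theorem wl_braidT₄_comp_e₁ :
    wl S.braidT₄ ≫ A ◁ S.e₁ = leg13 A S.e₁ ≫ wl S.braidT₄ := by
  apply S.eq_of_comp_rightMulFst
  calc _ = (wl S.braidT₄ ▷ A ≫ (α_ _ _ _).hom ≫ A ◁ S.rightMulFst) ≫ A ◁ S.e₁ := by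
        simp only [assoc, ← whiskerLeft_comp, rightMulFst_comp_e₁]; simp
    _ = 𝟙 _ ⊗≫ (A ⊗ A) ◁ (β_ A A).hom ⊗≫
          (dOne S.m S.t₁ ▷ A ≫ (α_ _ _ _).hom ≫ A ◁ S.e₁) := by
        rw [wl_braidT₄_comp_rightMulFst]; monoidal
    _ = 𝟙 _ ⊗≫ (A ⊗ A) ◁ ((β_ A A).hom ≫ (β_ A A).inv) ⊗≫ leg12 A (leg13 A S.e₁) ⊗≫
          (A ⊗ A) ◁ (β_ A A).hom ⊗≫ dOne S.m S.t₁ ▷ A ⊗≫ 𝟙 _ := by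
        rw [dOne_whiskerRight_comp_e₁, leg13_leg13]; monoidal
    _ = leg13 A S.e₁ ▷ A ≫ (wl S.braidT₄ ▷ A ≫ (α_ _ _ _).hom ≫ A ◁ S.rightMulFst) := by
        rw [wl_braidT₄_comp_rightMulFst, Iso.hom_inv_id, leg12]; monoidal
    _ = _ := by simp

theorem wl_braidT₄_comp_piL1 : wl S.braidT₄ ≫ A ◁ S.piL1 = ml S.m ≫ S.e₁ := by
  have counit : wl S.braidT₄ ≫ A ◁ (S.j ▷ A ≫ (λ_ A).hom) = ml S.m := by
    rw [ml, ← braidT₄_comp_j, wl]; monoidal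
  calc _ = (wl S.braidT₄ ≫ A ◁ S.e₁) ≫ A ◁ (S.j ▷ A ≫ (λ_ A).hom) := by simp [piL1]
    _ = _ := by rw [wl_braidT₄_comp_e₁, assoc, counit, leg13_e₁_comp_ml]

theorem whiskerLeft_t₁_comp_wl_e₁_comp_j :
    A ◁ S.t₁ ≫ wl S.e₁ ≫ A ◁ (S.j ▷ A ≫ (λ_ A).hom) = A ◁ S.m ≫ S.e₁ := by
  have h := S.rightMulSnd_comp_e₁
  simp only [rightMulSnd, assoc] at h
  rw [reassoc_of% S.ax5, ← whiskerLeft_comp, ← S.hm₁, wl, assoc, assoc, ← h]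
  simp

theorem sIdem_self_eq_e₁ [Epi (S.m ▷ A)] [Epi ((A ⊗ A) ◁ S.m)]
    {L : C} {p : A ⟶ L} {n₁ : L ⊗ A ⟶ A} (hn₁ : p ▷ A ≫ n₁ = S.piL1)
    {μ : L ⊗ L ⟶ L} (hμ : L ◁ p ≫ μ = n₁ ≫ p) {ε : L ⟶ 𝟙_ C} (hε : p ≫ ε = S.j)
    {τ : A ⟶ L ⊗ A} (hτ : S.m ≫ τ = S.t₁ ≫ p ▷ A)
    {τbar : A ⟶ A ⊗ L} (hτbar : S.m ≫ τbar = (β_ A A).hom ≫ S.t₄ ≫ A ◁ p) :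
    sIdem μ ε τbar τ = S.e₁ := by
  have pairing : p ▷ A ≫ L ◁ p ≫ μ ≫ ε = S.piL1 ≫ S.j := by
    rw [reassoc_of% hμ, reassoc_of% hn₁, hε]
  rw [← assoc, ← braidT₄] at hτbar
  have coactions : (A ⊗ A) ◁ S.m ≫ S.m ▷ A ≫ τbar ▷ A ≫ (A ⊗ L) ◁ τ =
      (A ⊗ A) ◁ S.t₁ ≫ S.braidT₄ ▷ (A ⊗ A) ≫ (A ◁ p) ▷ (A ⊗ A) ≫ (A ⊗ L) ◁ (p ▷ A) := by
    rw [← comp_whiskerRight_assoc, whisker_exchange_assoc, ← whiskerLeft_comp, hτbar, hτ,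
      comp_whiskerRight, assoc, whiskerLeft_comp, ← whisker_exchange_assoc,
      ← whisker_exchange_assoc]
  rw [← cancel_epi (S.m ▷ A), ← cancel_epi ((A ⊗ A) ◁ S.m)]
  calc _ = ((A ⊗ A) ◁ S.m ≫ S.m ▷ A ≫ τbar ▷ A ≫ (A ⊗ L) ◁ τ) ⊗≫ A ◁ (μ ≫ ε) ▷ A ⊗≫ 𝟙 _ := by
        rw [sIdem]; monoidal
    _ = (A ⊗ A) ◁ S.t₁ ⊗≫ S.braidT₄ ▷ (A ⊗ A) ⊗≫ A ◁ (p ▷ A ≫ L ◁ p ≫ μ ≫ ε) ▷ A ⊗≫ 𝟙 _ := by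
        rw [coactions]; monoidal
    _ = (A ⊗ A) ◁ S.t₁ ⊗≫ (wl S.braidT₄ ≫ A ◁ S.piL1) ▷ A ⊗≫ A ◁ (S.j ▷ A ≫ (λ_ A).hom) := by
        rw [pairing, wl]; monoidal
    _ = ((A ⊗ A) ◁ S.t₁ ≫ S.m ▷ (A ⊗ A)) ⊗≫ S.e₁ ▷ A ⊗≫ A ◁ (S.j ▷ A ≫ (λ_ A).hom) := by
        rw [wl_braidT₄_comp_piL1, ml]; monoidal
    _ = S.m ▷ (A ⊗ A) ≫ (A ◁ S.t₁ ≫ wl S.e₁ ≫ A ◁ (S.j ▷ A ≫ (λ_ A).hom)) := by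
        rw [whisker_exchange, wl]; monoidal
    _ = _ := by rw [whiskerLeft_t₁_comp_wl_e₁_comp_j, whisker_exchange_assoc]

/-! ### The morphisms `d₁` and `d₂` -/

theorem rightMulFst_assoc :
    S.rightMulFst ▷ A ≫ S.rightMulFst =
      (α_ _ _ _).hom ≫ (A ⊗ A) ◁ S.m ≫ S.rightMulFst := by
  have h := tensorPairing_assoc (f₂ := (ρ_ A).hom) (g₂ := (ρ_ A).hom) (h₂ := (ρ_ (𝟙_ C)).hom)
    (k₂ := (ρ_ A).hom) S.m_assoc (by monoidal)
  have m_unit : tensorPairing S.m (ρ_ (𝟙_ C)).hom = 𝟙 _ ⊗≫ S.m ⊗≫ 𝟙 _ := by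
    simp only [tensorPairing, tensorμ, tensorHom_def', braiding_tensorUnit_left]
    monoidal
  rw [rightMulFst_eq_tensorPairing]
  set T := tensorPairing S.m (ρ_ A).hom
  calc _ = 𝟙 _ ⊗≫ (T ▷ A ≫ (A ⊗ A) ◁ (ρ_ A).inv) ≫ T := by monoidal
    _ = 𝟙 _ ⊗≫ (T ▷ (A ⊗ 𝟙_ C) ≫ T) := by rw [← whisker_exchange]; monoidal
    _ = _ := by rw [h, m_unit]; monoidal

theorem whiskerLeft_rightMulFst_comp_dOne :
    A ◁ S.rightMulFst ≫ dOne S.m S.t₁ =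
      (α_ _ _ _).inv ≫ dOne S.m S.t₁ ▷ A ≫ S.rightMulFst := by
  have passes : A ◁ S.rightMulFst ≫ A ◁ (β_ A A).inv =
      A ◁ ((β_ A A).inv ▷ A ≫ (α_ _ _ _).hom ≫ A ◁ S.m) := by
    rw [← whiskerLeft_comp, rightMulFst_comp_braiding_inv]
  rw [dOne_eq_rightMulFst, reassoc_of% passes]
  calc _ = 𝟙 _ ⊗≫ A ◁ (β_ A A).inv ▷ A ⊗≫ ((A ⊗ A) ◁ S.m ≫ S.t₁ ▷ A) ≫ S.rightMulFst := by
        monoidal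
    _ = 𝟙 _ ⊗≫ A ◁ (β_ A A).inv ▷ A ⊗≫ S.t₁ ▷ A ▷ A ≫
          ((α_ _ _ _).hom ≫ (A ⊗ A) ◁ S.m ≫ S.rightMulFst) := by
        rw [whisker_exchange]; monoidal
    _ = _ := by rw [← rightMulFst_assoc]; monoidal

theorem dOne_assoc :
    A ◁ dOne S.m S.t₁ ≫ dOne S.m S.t₁ =
      (α_ _ _ _).inv ≫ S.m ▷ (A ⊗ A) ≫ dOne S.m S.t₁ := by
  calc _ = A ◁ (A ◁ (β_ A A).inv ≫ (α_ A A A).inv ≫ S.t₁ ▷ A) ≫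
          (A ◁ S.rightMulFst ≫ dOne S.m S.t₁) := by
        nth_rw 1 [dOne_eq_rightMulFst]; simp only [whiskerLeft_comp, assoc]
    _ = A ◁ (A ◁ (β_ A A).inv ≫ (α_ A A A).inv) ⊗≫ (A ◁ S.t₁ ≫ dOne S.m S.t₁) ▷ A ≫
          S.rightMulFst := by
        rw [whiskerLeft_rightMulFst_comp_dOne]; monoidal
    _ = 𝟙 _ ⊗≫ ((A ⊗ A) ◁ (β_ A A).inv ≫ S.m ▷ (A ⊗ A)) ⊗≫ S.t₁ ▷ A ≫ S.rightMulFst := by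
        rw [whiskerLeft_t₁_comp_dOne, ml]; monoidal
    _ = _ := by rw [whisker_exchange, dOne_eq_rightMulFst]; monoidal

theorem mulSq_eq_rightMulSnd_comp_rightMulFst :
    S.mulSq = (A ⊗ A) ◁ (β_ A A).inv ≫ (α_ _ _ _).inv ≫ S.rightMulSnd ▷ A ≫ S.rightMulFst := by
  have h := BraidedCategory.braiding_naturality_left S.m A
  rw [BraidedCategory.braiding_tensor_left_hom] at h
  symm
  calc _ = 𝟙 _ ⊗≫ A ◁ A ◁ (β_ A A).inv ⊗≫ A ◁ (S.m ▷ A ≫ (β_ A A).hom) ⊗≫ S.m ▷ A := by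
        rw [rightMulFst, rightMulSnd]; monoidal
    _ = 𝟙 _ ⊗≫ A ◁ A ◁ ((β_ A A).inv ≫ (β_ A A).hom) ⊗≫ A ◁ (β_ A A).hom ▷ A ⊗≫
          ((A ⊗ A) ◁ S.m ≫ S.m ▷ A) := by
        rw [h]; monoidal
    _ = _ := by rw [Iso.inv_hom_id, mulSq, tensorPairing, tensorμ, tensorHom_def']; monoidal

theorem dTwo_whiskerRight_comp_rightMulSnd :
    dTwo S.m S.t₂ ▷ A ≫ S.rightMulSnd =
      (α_ A A A).inv ▷ A ≫ (α_ _ _ _).hom ≫ (A ⊗ A) ◁ S.t₁ ≫ S.mulSq := by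
  have h := BraidedCategory.braiding_naturality_right A S.m
  rw [BraidedCategory.braiding_tensor_right_hom] at h
  calc _ = 𝟙 _ ⊗≫ (β_ A A).inv ▷ (A ⊗ A) ⊗≫ A ◁ S.t₂ ▷ A ⊗≫ (β_ A A).hom ▷ (A ⊗ A) ⊗≫
          A ◁ (S.m ▷ A ≫ S.m) := by
        rw [dTwo, wl, wl, rightMulSnd]; monoidal
    _ = 𝟙 _ ⊗≫ (β_ A A).inv ▷ (A ⊗ A) ⊗≫ A ◁ S.t₂ ▷ A ⊗≫ ((β_ A A).hom ▷ (A ⊗ A) ≫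
          (A ⊗ A) ◁ S.m) ⊗≫ A ◁ S.m := by
        rw [m_assoc]; monoidal
    _ = 𝟙 _ ⊗≫ (β_ A A).inv ▷ (A ⊗ A) ⊗≫ A ◁ (wl S.t₂ ≫ A ◁ S.m) ⊗≫ (β_ A A).hom ▷ A ⊗≫
          A ◁ S.m := by
        rw [← whisker_exchange, wl]; monoidal
    _ = 𝟙 _ ⊗≫ ((β_ A A).inv ▷ (A ⊗ A) ≫ (A ⊗ A) ◁ S.t₁) ⊗≫ (A ◁ S.m ≫ (β_ A A).hom) ▷ A ⊗≫
          A ◁ S.m := by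
        rw [← S.hc12, ml]; monoidal
    _ = 𝟙 _ ⊗≫ (A ⊗ A) ◁ S.t₁ ⊗≫ ((β_ A A).inv ≫ (β_ A A).hom) ▷ (A ⊗ A) ⊗≫
          A ◁ (β_ A A).hom ▷ A ⊗≫ (S.m ▷ (A ⊗ A) ≫ A ◁ S.m) := by
        rw [← whisker_exchange, h]; monoidal
    _ = _ := by
        rw [Iso.inv_hom_id, mulSq, tensorPairing, tensorμ, MonoidalCategory.tensorHom_def]
        monoidal

theorem dTwo_whiskerRight_comp_mulSq :
    dTwo S.m S.t₂ ▷ (A ⊗ A) ≫ S.mulSq =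
      (α_ A A A).inv ▷ (A ⊗ A) ≫ (α_ _ _ _).hom ≫ (A ⊗ A) ◁ dOne S.m S.t₁ ≫ S.mulSq := by
  symm
  calc _ = 𝟙 _ ⊗≫ (A ⊗ A) ◁ (A ◁ (β_ A A).inv ≫ (α_ A A A).inv ≫ S.t₁ ▷ A) ≫
          ((A ⊗ A) ◁ S.rightMulFst ≫ S.mulSq) := by
        rw [dOne_eq_rightMulFst]; monoidal
    _ = 𝟙 _ ⊗≫ (A ⊗ A) ◁ A ◁ (β_ A A).inv ⊗≫
          ((α_ A A A).inv ▷ A ≫ (α_ _ _ _).hom ≫ (A ⊗ A) ◁ S.t₁ ≫ S.mulSq) ▷ A ≫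
          S.rightMulFst := by
        rw [whiskerLeft_rightMulFst_comp_mulSq]; monoidal
    _ = 𝟙 _ ⊗≫ ((A ⊗ A ⊗ A) ◁ (β_ A A).inv ≫ dTwo S.m S.t₂ ▷ (A ⊗ A)) ⊗≫
          S.rightMulSnd ▷ A ≫ S.rightMulFst := by
        rw [← dTwo_whiskerRight_comp_rightMulSnd]; monoidal
    _ = _ := by rw [whisker_exchange, mulSq_eq_rightMulSnd_comp_rightMulFst]; monoidal

end RWMB

/-! ### Regular epimorphisms -/

section RegularEpi

variable {D : Type*} [Category* D] {X Y Z : D}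

instance isRegularEpi_map {E : Type*} [Category* E] (F : D ⥤ E)
    [PreservesColimitsOfShape WalkingParallelPair F] (f : X ⟶ Y) [IsRegularEpi f] :
    IsRegularEpi (F.map f) :=
  ⟨⟨_, F.map (IsRegularEpi.left f), F.map (IsRegularEpi.right f),
    by rw [← F.map_comp, IsRegularEpi.w, F.map_comp],
    isColimitCoforkMapOfIsColimit F (IsRegularEpi.w f) (IsRegularEpi.isColimit f)⟩⟩

theorem isRegularEpi_comp [(MorphismProperty.regularEpi D).IsStableUnderComposition]
    (f : X ⟶ Y) (g : Y ⟶ Z) [hf : IsRegularEpi f] [hg : IsRegularEpi g] :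
    IsRegularEpi (f ≫ g) :=
  (MorphismProperty.regularEpi D).comp_mem f g hf hg

theorem isRegularEpi_of_epi_of_comp (f : X ⟶ Y) (g : Y ⟶ Z) [Epi f] [IsRegularEpi (f ≫ g)] :
    IsRegularEpi g := by
  have w := IsRegularEpi.w (f ≫ g)
  rw [← assoc, ← assoc] at w
  refine ⟨⟨_, _, _, w, Cofork.IsColimit.mk' _ fun s => ?_⟩⟩
  have hs := s.condition
  rw [assoc, assoc] at hs
  have fac := IsRegularEpi.fac (f ≫ g) (f ≫ s.π) hs
  rw [assoc, cancel_epi] at fac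
  refine ⟨_, fac, fun {l} hl => IsRegularEpi.uniq (f ≫ g) (f ≫ s.π) hs l ?_⟩
  rw [assoc, ← hl]
  rfl

theorem isRegularEpi_retract_i_comp (h : Retract X Y) (q : Y ⟶ Z) [IsRegularEpi q]
    (hq : h.r ≫ h.i ≫ q = q) : IsRegularEpi (h.i ≫ q) := by
  have : IsRegularEpi (h.r ≫ h.i ≫ q) := by rwa [hq]
  exact isRegularEpi_of_epi_of_comp h.r (h.i ≫ q)

variable [MonoidalCategory D]

instance isRegularEpi_whiskerLeft [PreservesColimitsOfShape WalkingParallelPair (tensorLeft Z)]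
    (f : X ⟶ Y) [IsRegularEpi f] : IsRegularEpi (Z ◁ f) :=
  isRegularEpi_map (tensorLeft Z) f

instance isRegularEpi_whiskerRight [PreservesColimitsOfShape WalkingParallelPair (tensorRight Z)]
    (f : X ⟶ Y) [IsRegularEpi f] : IsRegularEpi (f ▷ Z) :=
  isRegularEpi_map (tensorRight Z) f

end RegularEpi

theorem isRegularEpi_tensorPairing [(MorphismProperty.regularEpi C).IsStableUnderComposition]
    {X₁ X₂ Y₁ Y₂ Z₁ Z₂ : C} [PreservesColimitsOfShape WalkingParallelPair (tensorLeft Z₁)]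
    [PreservesColimitsOfShape WalkingParallelPair (tensorRight (X₂ ⊗ Y₂))]
    (x : X₁ ⊗ Y₁ ⟶ Z₁) (y : X₂ ⊗ Y₂ ⟶ Z₂) [IsRegularEpi x] [IsRegularEpi y] :
    IsRegularEpi (tensorPairing x y) := by
  have : IsIso (tensorμ X₁ X₂ Y₁ Y₂) := by unfold tensorμ; infer_instance
  have : IsRegularEpi (x ⊗ₘ y) := by
    rw [MonoidalCategory.tensorHom_def]
    exact isRegularEpi_comp (x ▷ (X₂ ⊗ Y₂)) (Z₁ ◁ y)
  exact isRegularEpi_comp (tensorμ X₁ X₂ Y₁ Y₂) (x ⊗ₘ y)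

/-! ### Actions on a retract -/

section Retract

variable {D : Type u} [Category.{v} D] [MonoidalCategory D] {A T U : D}

/-- Relative form of `NdLeftOn`: injectivity is only required on the morphisms fixed by `s`. -/
def NdLeftOnFixed (b₀ : A ⊗ U ⟶ U) (s : U ⟶ U) (𝒴 : Set D) : Prop :=
  ∀ (X : D), ∀ Y ∈ 𝒴, Set.InjOn
    (fun g : X ⟶ U ⊗ Y => A ◁ g ≫ (α_ A U Y).inv ≫ b₀ ▷ Y) {g | g ≫ s ▷ Y = g}

/-- The morphism induced on a retract `T` of `U` by an action on `U`; in the paper `T = V ∘ W`. -/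
def retractAct (h : Retract T U) (b₀ : A ⊗ U ⟶ U) : A ⊗ T ⟶ T :=
  A ◁ h.i ≫ b₀ ≫ h.r

variable {h : Retract T U} {b₀ : A ⊗ U ⟶ U}

theorem eq_retractAct {b : A ⊗ T ⟶ T} (hb : A ◁ h.r ≫ b = b₀ ≫ h.r) : b = retractAct h b₀ := by
  rw [retractAct, ← hb, ← whiskerLeft_comp_assoc, h.retract, whiskerLeft_id, id_comp]

theorem whiskerLeft_r_comp_retractAct (hl : A ◁ (h.r ≫ h.i) ≫ b₀ = b₀) :
    A ◁ h.r ≫ retractAct h b₀ = b₀ ≫ h.r := by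
  rw [retractAct, ← whiskerLeft_comp_assoc, reassoc_of% hl]

theorem retractAct_comp_i (hr : b₀ ≫ h.r ≫ h.i = b₀) :
    retractAct h b₀ ≫ h.i = A ◁ h.i ≫ b₀ := by
  rw [retractAct, assoc, assoc, hr]

theorem retractAct_assoc {m : A ⊗ A ⟶ A} (hl : A ◁ (h.r ≫ h.i) ≫ b₀ = b₀)
    (hb₀ : A ◁ b₀ ≫ b₀ = (α_ A A U).inv ≫ m ▷ U ≫ b₀) :
    A ◁ retractAct h b₀ ≫ retractAct h b₀ = (α_ A A T).inv ≫ m ▷ T ≫ retractAct h b₀ := by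
  calc _ = A ◁ A ◁ h.i ≫ A ◁ b₀ ≫ (A ◁ h.r ≫ retractAct h b₀) := by
        nth_rw 1 [retractAct]; simp only [whiskerLeft_comp, assoc]
    _ = A ◁ A ◁ h.i ≫ (α_ A A U).inv ≫ m ▷ U ≫ b₀ ≫ h.r := by
        rw [whiskerLeft_r_comp_retractAct hl, reassoc_of% hb₀]
    _ = _ := by
        rw [associator_inv_naturality_right_assoc, whisker_exchange_assoc, retractAct]

theorem retractAct_comp {T' U' : D} {b₀' : A ⊗ U' ⟶ U'} {b' : A ⊗ T' ⟶ T'} {r' : U' ⟶ T'}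
    (hr : b₀ ≫ h.r ≫ h.i = b₀) (hb' : A ◁ r' ≫ b' = b₀' ≫ r') {f : U ⟶ U'}
    (hf : b₀ ≫ f = A ◁ f ≫ b₀') :
    retractAct h b₀ ≫ (h.i ≫ f ≫ r') = A ◁ (h.i ≫ f ≫ r') ≫ b' := by
  rw [← assoc, retractAct_comp_i hr, assoc, reassoc_of% hf, ← hb']
  simp only [whiskerLeft_comp, assoc]

theorem NdLeftOnFixed.retractAct {𝒴 : Set D} (hb₀ : NdLeftOnFixed b₀ (h.r ≫ h.i) 𝒴)
    (hr : b₀ ≫ h.r ≫ h.i = b₀) : NdLeftOn (retractAct h b₀) 𝒴 := by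
  intro X Y hY g g' hg
  have act_i (g : X ⟶ T ⊗ Y) : A ◁ (g ≫ h.i ▷ Y) ≫ (α_ A U Y).inv ≫ b₀ ▷ Y =
      (A ◁ g ≫ (α_ A T Y).inv ≫ WeakMultiplierBimonoid.retractAct h b₀ ▷ Y) ≫ h.i ▷ Y := by
    rw [assoc, assoc, ← comp_whiskerRight, retractAct_comp_i hr]
    monoidal
  have fixed (g : X ⟶ T ⊗ Y) : (g ≫ h.i ▷ Y) ≫ (h.r ≫ h.i) ▷ Y = g ≫ h.i ▷ Y := by
    rw [assoc, ← comp_whiskerRight, h.retract_assoc]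
  have := hb₀ X Y hY (fixed g) (fixed g')
    ((act_i g).trans ((congrArg (· ≫ h.i ▷ Y) hg).trans (act_i g').symm))
  simpa [← comp_whiskerRight] using this =≫ h.r ▷ Y

end Retract

/-! ### The action defined by `d₁` -/

namespace RWMB

variable {A U : C} {𝒴 : Set C} (S : RWMB A 𝒴) {P : (A ⊗ A) ⊗ U ⟶ U} {b₀ : A ⊗ U ⟶ U}
  {s : U ⟶ U}

/-- `b₀` is the action of `A` on `U` transported from `d₁` along `P : (A ⊗ A) ⊗ U ⟶ U`. For
`P = (v ⊗ w) ∘ (1 ⊗ c ⊗ 1)` this is the defining equation of the action `b⁰` of Lemma 4.6. -/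
def IsDiagonalAct (P : (A ⊗ A) ⊗ U ⟶ U) (b₀ : A ⊗ U ⟶ U) : Prop :=
  A ◁ P ≫ b₀ = (α_ A (A ⊗ A) U).inv ≫ dOne S.m S.t₁ ▷ U ≫ P

variable {S}

namespace IsDiagonalAct

theorem comp_eq_self [Epi (A ◁ P)] (hb₀ : S.IsDiagonalAct P b₀) (hs : P ≫ s = S.e₁ ▷ U ≫ P) :
    b₀ ≫ s = b₀ := by
  rw [IsDiagonalAct] at hb₀
  rw [← cancel_epi (A ◁ P), reassoc_of% hb₀, hb₀, hs, ← comp_whiskerRight_assoc, dOne_comp_e₁]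

theorem whiskerLeft_comp_eq_self [Epi (A ◁ P)] (hb₀ : S.IsDiagonalAct P b₀)
    (hs : P ≫ s = S.e₁ ▷ U ≫ P) : A ◁ s ≫ b₀ = b₀ := by
  rw [IsDiagonalAct] at hb₀
  have e₁_comp_dOne : A ◁ S.e₁ ≫ dOne S.m S.t₁ = dOne S.m S.t₁ := S.ax4
  rw [← cancel_epi (A ◁ P), ← whiskerLeft_comp_assoc, hs, whiskerLeft_comp_assoc, hb₀,
    associator_inv_naturality_middle_assoc, ← comp_whiskerRight_assoc, e₁_comp_dOne]

theorem assoc_of_epi [Epi (A ◁ A ◁ P)] (hb₀ : S.IsDiagonalAct P b₀) :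
    A ◁ b₀ ≫ b₀ = (α_ A A U).inv ≫ S.m ▷ U ≫ b₀ := by
  rw [IsDiagonalAct] at hb₀
  rw [← cancel_epi (A ◁ A ◁ P)]
  calc _ = A ◁ (A ◁ P ≫ b₀) ≫ b₀ := by simp
    _ = A ◁ ((α_ A (A ⊗ A) U).inv ≫ dOne S.m S.t₁ ▷ U ≫ P) ≫ b₀ := by rw [hb₀]
    _ = 𝟙 _ ⊗≫ A ◁ dOne S.m S.t₁ ▷ U ≫ (A ◁ P ≫ b₀) := by monoidal
    _ = 𝟙 _ ⊗≫ (A ◁ dOne S.m S.t₁ ≫ dOne S.m S.t₁) ▷ U ≫ P := by rw [hb₀]; monoidal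
    _ = 𝟙 _ ⊗≫ S.m ▷ ((A ⊗ A) ⊗ U) ≫ ((α_ A (A ⊗ A) U).inv ≫ dOne S.m S.t₁ ▷ U ≫ P) := by
        rw [dOne_assoc]; monoidal
    _ = 𝟙 _ ⊗≫ (S.m ▷ ((A ⊗ A) ⊗ U) ≫ A ◁ P) ≫ b₀ := by rw [← hb₀]; monoidal
    _ = _ := by rw [← whisker_exchange]; monoidal

theorem comp_eq_whiskerLeft_comp {U' : C} {P' : (A ⊗ A) ⊗ U' ⟶ U'} {b₀' : A ⊗ U' ⟶ U'}
    {f : U ⟶ U'} [Epi (A ◁ P)] (hb₀ : S.IsDiagonalAct P b₀) (hb₀' : S.IsDiagonalAct P' b₀')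
    (hf : P ≫ f = (A ⊗ A) ◁ f ≫ P') : b₀ ≫ f = A ◁ f ≫ b₀' := by
  rw [IsDiagonalAct] at hb₀ hb₀'
  rw [← cancel_epi (A ◁ P), reassoc_of% hb₀, hf, ← whiskerLeft_comp_assoc, hf,
    whiskerLeft_comp_assoc, hb₀', associator_inv_naturality_right_assoc, whisker_exchange_assoc]

theorem dTwo_whiskerRight_comp [Epi ((A ⊗ (A ⊗ A)) ◁ P)] (hb₀ : S.IsDiagonalAct P b₀)
    (hP : S.mulSq ▷ U ≫ P = (α_ _ _ _).hom ≫ (A ⊗ A) ◁ P ≫ P) :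
    dTwo S.m S.t₂ ▷ U ≫ P = (α_ A A A).inv ▷ U ≫ (α_ _ _ _).hom ≫ (A ⊗ A) ◁ b₀ ≫ P := by
  rw [IsDiagonalAct] at hb₀
  rw [← cancel_epi ((A ⊗ (A ⊗ A)) ◁ P)]
  calc _ = dTwo S.m S.t₂ ▷ ((A ⊗ A) ⊗ U) ≫ (A ⊗ A) ◁ P ≫ P := by rw [whisker_exchange_assoc]
    _ = 𝟙 _ ⊗≫ (dTwo S.m S.t₂ ▷ (A ⊗ A) ≫ S.mulSq) ▷ U ≫ P := by
        rw [comp_whiskerRight_assoc, hP]; monoidal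
    _ = 𝟙 _ ⊗≫ (A ⊗ A) ◁ dOne S.m S.t₁ ▷ U ⊗≫ S.mulSq ▷ U ≫ P := by
        rw [dTwo_whiskerRight_comp_mulSq]; monoidal
    _ = 𝟙 _ ⊗≫ (A ⊗ A) ◁ ((α_ A (A ⊗ A) U).inv ≫ dOne S.m S.t₁ ▷ U ≫ P) ≫ P := by
        rw [hP]; monoidal
    _ = _ := by rw [← hb₀]; monoidal

end IsDiagonalAct

theorem e₂_whiskerRight_comp [Epi ((A ⊗ A) ◁ P)] (hs : P ≫ s = S.e₁ ▷ U ≫ P)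
    (hP : S.mulSq ▷ U ≫ P = (α_ _ _ _).hom ≫ (A ⊗ A) ◁ P ≫ P) :
    S.e₂ ▷ U ≫ P = (A ⊗ A) ◁ s ≫ P := by
  rw [← cancel_epi ((A ⊗ A) ◁ P)]
  calc _ = S.e₂ ▷ ((A ⊗ A) ⊗ U) ≫ (A ⊗ A) ◁ P ≫ P := by rw [whisker_exchange_assoc]
    _ = 𝟙 _ ⊗≫ (S.e₂ ▷ (A ⊗ A) ≫ S.mulSq) ▷ U ≫ P := by
        rw [comp_whiskerRight_assoc, hP]; monoidal
    _ = 𝟙 _ ⊗≫ (A ⊗ A) ◁ S.e₁ ▷ U ⊗≫ S.mulSq ▷ U ≫ P := by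
        rw [← whiskerLeft_e₁_comp_mulSq]; monoidal
    _ = 𝟙 _ ⊗≫ (A ⊗ A) ◁ (S.e₁ ▷ U ≫ P) ≫ P := by rw [hP]; monoidal
    _ = _ := by rw [← hs]; monoidal

theorem IsDiagonalAct.ndLeftOnFixed [Epi ((A ⊗ A) ◁ P)] [Epi ((A ⊗ (A ⊗ A)) ◁ P)] {E₂ : C}
    {eHat₂ : A ⊗ A ⟶ E₂} {eCheck₂ : E₂ ⟶ A ⊗ A} (he₂ : eHat₂ ≫ eCheck₂ = S.e₂)
    [∀ X, Epi ((dTwo S.m S.t₂ ≫ eHat₂) ▷ X)] (hb₀ : S.IsDiagonalAct P b₀)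
    (hs : P ≫ s = S.e₁ ▷ U ≫ P)
    (hP : S.mulSq ▷ U ≫ P = (α_ _ _ _).hom ≫ (A ⊗ A) ◁ P ≫ P) {𝒯 : Set C}
    (hnd : NdLeftOn P 𝒯) : NdLeftOnFixed b₀ s 𝒯 := by
  intro X Y hY g hg g' hg' hgg'
  let ev (g : X ⟶ U ⊗ Y) : (A ⊗ A) ⊗ X ⟶ U ⊗ Y := (A ⊗ A) ◁ g ≫ (α_ _ _ _).inv ≫ P ▷ Y
  have e₂_comp_ev {g : X ⟶ U ⊗ Y} (hg : g ≫ s ▷ Y = g) : S.e₂ ▷ X ≫ ev g = ev g := by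
    calc _ = (A ⊗ A) ◁ g ≫ (α_ _ _ _).inv ≫ (S.e₂ ▷ U ≫ P) ▷ Y := by
          rw [← whisker_exchange_assoc]; monoidal
      _ = (A ⊗ A) ◁ (g ≫ s ▷ Y) ≫ (α_ _ _ _).inv ≫ P ▷ Y := by
          rw [e₂_whiskerRight_comp hs hP]; monoidal
      _ = ev g := by rw [hg]
  have dTwo_comp_ev (g : X ⟶ U ⊗ Y) : dTwo S.m S.t₂ ▷ X ≫ ev g =
      𝟙 _ ⊗≫ (A ⊗ A) ◁ (A ◁ g ≫ (α_ _ _ _).inv ≫ b₀ ▷ Y) ≫ (α_ _ _ _).inv ≫ P ▷ Y := by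
    calc _ = (A ⊗ (A ⊗ A)) ◁ g ≫ (α_ _ _ _).inv ≫ (dTwo S.m S.t₂ ▷ U ≫ P) ▷ Y := by
          rw [← whisker_exchange_assoc]; monoidal
      _ = _ := by rw [hb₀.dTwo_whiskerRight_comp hP]; monoidal
  have dTwoHat_comp_ev {g : X ⟶ U ⊗ Y} (hg : g ≫ s ▷ Y = g) :
      (dTwo S.m S.t₂ ≫ eHat₂) ▷ X ≫ eCheck₂ ▷ X ≫ ev g = dTwo S.m S.t₂ ▷ X ≫ ev g := by
    rw [← comp_whiskerRight_assoc, assoc, he₂, comp_whiskerRight_assoc, e₂_comp_ev hg]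
  have eCheck₂_comp_ev : eCheck₂ ▷ X ≫ ev g = eCheck₂ ▷ X ≫ ev g' := by
    rw [← cancel_epi ((dTwo S.m S.t₂ ≫ eHat₂) ▷ X), dTwoHat_comp_ev hg, dTwoHat_comp_ev hg',
      dTwo_comp_ev, dTwo_comp_ev]
    exact congrArg (fun k => 𝟙 _ ⊗≫ (A ⊗ A) ◁ k ≫ (α_ _ _ _).inv ≫ P ▷ Y) hgg'
  refine hnd X Y hY (?_ : ev g = ev g')
  rw [← e₂_comp_ev hg, ← e₂_comp_ev hg', ← he₂, comp_whiskerRight_assoc, comp_whiskerRight_assoc,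
    eCheck₂_comp_ev]

theorem IsDiagonalAct.isRegularEpi_retractAct
    [∀ X : C, PreservesColimitsOfShape WalkingParallelPair (tensorLeft X)]
    [∀ X : C, PreservesColimitsOfShape WalkingParallelPair (tensorRight X)]
    [(MorphismProperty.regularEpi C).IsStableUnderComposition] {T E₁ : C} {h : Retract T U}
    {h₁ : Retract E₁ (A ⊗ A)} (he₁ : h₁.r ≫ h₁.i = S.e₁) [IsRegularEpi P]
    [IsRegularEpi (dOne S.m S.t₁ ≫ h₁.r)] (hb₀ : S.IsDiagonalAct P b₀)
    (hs : P ≫ h.r ≫ h.i = S.e₁ ▷ U ≫ P) : IsRegularEpi (retractAct h b₀) := by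
  have : IsRegularEpi (P ≫ h.r) := isRegularEpi_comp P h.r
  have : IsRegularEpi (h₁.i ▷ U ≫ P ≫ h.r) := by
    refine isRegularEpi_retract_i_comp (h₁.map (tensorRight U)) (P ≫ h.r) ?_
    change h₁.r ▷ U ≫ h₁.i ▷ U ≫ P ≫ h.r = P ≫ h.r
    rw [← comp_whiskerRight_assoc, he₁, ← reassoc_of% hs, h.retract, comp_id]
  have comp_retractAct : A ◁ (P ≫ h.r) ≫ retractAct h b₀ =
      (α_ A (A ⊗ A) U).inv ≫ (dOne S.m S.t₁ ≫ h₁.r) ▷ U ≫ h₁.i ▷ U ≫ P ≫ h.r := by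
    have defining : A ◁ P ≫ b₀ = (α_ A (A ⊗ A) U).inv ≫ dOne S.m S.t₁ ▷ U ≫ P := hb₀
    rw [whiskerLeft_comp_assoc, whiskerLeft_r_comp_retractAct (hb₀.whiskerLeft_comp_eq_self hs),
      reassoc_of% defining, ← comp_whiskerRight_assoc, assoc, he₁, dOne_comp_e₁]
  have : IsRegularEpi (A ◁ (P ≫ h.r) ≫ retractAct h b₀) := by
    rw [comp_retractAct]
    have := isRegularEpi_comp ((dOne S.m S.t₁ ≫ h₁.r) ▷ U) (h₁.i ▷ U ≫ P ≫ h.r)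
    exact isRegularEpi_comp (α_ A (A ⊗ A) U).inv _
  exact isRegularEpi_of_epi_of_comp (A ◁ (P ≫ h.r)) (retractAct h b₀)

end RWMB

/-! ### The product of two modules -/

theorem AModule.tensorPairing_act_ndLeftOn {A : C} {m : A ⊗ A ⟶ A} {𝒴 : Set C}
    (M N : AModule A m 𝒴) (hclosed : ∀ Y Y' : C, Y ∈ 𝒴 → Y' ∈ 𝒴 → (Y ⊗ Y') ∈ 𝒴) :
    NdLeftOn (tensorPairing M.act N.act) 𝒴 := fun X Y hY =>
  (M.nd.singleton_of_mem (hclosed _ _ N.mem hY)).tensorPairing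
    (N.nd.singleton_of_mem (hclosed _ _ hY M.mem)) X Y rfl

theorem RWMB.tensorPairing_act_assoc {A : C} {𝒴 : Set C} (S : RWMB A 𝒴) (M N : AModule A S.m 𝒴) :
    S.mulSq ▷ (M.V ⊗ N.V) ≫ tensorPairing M.act N.act =
      (α_ _ _ _).hom ≫ (A ⊗ A) ◁ tensorPairing M.act N.act ≫ tensorPairing M.act N.act :=
  tensorPairing_assoc (by rw [M.assoc, Iso.hom_inv_id_assoc])
    (by rw [N.assoc, Iso.hom_inv_id_assoc])

theorem prop_module_structure_on_VoW_general
    (presL : ∀ X : C, PreservesColimitsOfShape WalkingParallelPair (tensorLeft X))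
    (presR : ∀ X : C, PreservesColimitsOfShape WalkingParallelPair (tensorRight X))
    (regcomp : ∀ {X Y Z : C} (f : X ⟶ Y) (g : Y ⟶ Z),
      Nonempty (RegularEpi f) → Nonempty (RegularEpi g) → Nonempty (RegularEpi (f ≫ g)))
    {A : C} {𝒴 : Set C} (S : RWMB A 𝒴) (hmreg : Nonempty (RegularEpi S.m))
    (hclosed : ∀ Y Y' : C, Y ∈ 𝒴 → Y' ∈ 𝒴 → (Y ⊗ Y') ∈ 𝒴)
    (hretract : ∀ (X Y : C), Y ∈ 𝒴 → ∀ (i : X ⟶ Y) (r : Y ⟶ X), i ≫ r = 𝟙 X → X ∈ 𝒴)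
    {L : C} {p : A ⟶ L} {n₁ : L ⊗ A ⟶ A} (hn₁ : p ▷ A ≫ n₁ = S.piL1)
    {μ : L ⊗ L ⟶ L} (hμ : L ◁ p ≫ μ = n₁ ≫ p) {ε : L ⟶ 𝟙_ C} (hε : p ≫ ε = S.j)
    {τ : A ⟶ L ⊗ A} (hτ : S.m ≫ τ = S.t₁ ≫ p ▷ A)
    {τbar : A ⟶ A ⊗ L} (hτbar : S.m ≫ τbar = (β_ A A).hom ≫ S.t₄ ≫ A ◁ p)
    {E₁ : C} {eHat₁ : A ⊗ A ⟶ E₁} {eCheck₁ : E₁ ⟶ A ⊗ A}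
    (he₁ : eHat₁ ≫ eCheck₁ = S.e₁) (he₁' : eCheck₁ ≫ eHat₁ = 𝟙 E₁)
    {E₂ : C} {eHat₂ : A ⊗ A ⟶ E₂} {eCheck₂ : E₂ ⟶ A ⊗ A} (he₂ : eHat₂ ≫ eCheck₂ = S.e₂)
    (hd₁ : Nonempty (RegularEpi (dOne S.m S.t₁ ≫ eHat₁)))
    (hd₂ : Nonempty (RegularEpi (dTwo S.m S.t₂ ≫ eHat₂)))
    (M N : AModule A S.m 𝒴) {τbM : M.V ⟶ M.V ⊗ L} {τN : N.V ⟶ L ⊗ N.V}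
    (hτbM : M.act ≫ τbM = τbar ▷ M.V ≫ (α_ A L M.V).hom ≫ A ◁ (β_ L M.V).hom ≫
      (α_ A M.V L).inv ≫ M.act ▷ L)
    (hτN : N.act ≫ τN = τ ▷ N.V ≫ (α_ L A N.V).hom ≫ L ◁ N.act)
    {VoW : C} {sHat : M.V ⊗ N.V ⟶ VoW} {sCheck : VoW ⟶ M.V ⊗ N.V}
    (hsHatCheck : sHat ≫ sCheck = sIdem μ ε τbM τN) (hsChecksHat : sCheck ≫ sHat = 𝟙 VoW)
    {b0 : A ⊗ (M.V ⊗ N.V) ⟶ M.V ⊗ N.V} (hb0 : S.IsDiagonalAct (actPair M.act N.act) b0) :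
    VoW ∈ 𝒴 ∧
    (∃ b : A ⊗ VoW ⟶ VoW,
      A ◁ sHat ≫ b = b0 ≫ sHat ∧
      (∀ b' : A ⊗ VoW ⟶ VoW, A ◁ sHat ≫ b' = b0 ≫ sHat → b' = b) ∧
      A ◁ b ≫ b = (α_ A A VoW).inv ≫ S.m ▷ VoW ≫ b ∧
      Nonempty (RegularEpi b) ∧
      NdLeftOn b 𝒴) ∧
    (∀ {V' W' VoW' : C} {v' : A ⊗ V' ⟶ V'} {w' : A ⊗ W' ⟶ W'} {sHat' : V' ⊗ W' ⟶ VoW'}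
      {b0' : A ⊗ (V' ⊗ W') ⟶ V' ⊗ W'} (_ : S.IsDiagonalAct (actPair v' w') b0')
      {b : A ⊗ VoW ⟶ VoW} (_ : A ◁ sHat ≫ b = b0 ≫ sHat)
      {b' : A ⊗ VoW' ⟶ VoW'} (_ : A ◁ sHat' ≫ b' = b0' ≫ sHat')
      {f : M.V ⟶ V'} (_ : M.act ≫ f = A ◁ f ≫ v')
      {g : N.V ⟶ W'} (_ : N.act ≫ g = A ◁ g ≫ w'),
      b ≫ (sCheck ≫ (f ⊗ₘ g) ≫ sHat') = A ◁ (sCheck ≫ (f ⊗ₘ g) ≫ sHat') ≫ b') := by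
  have : (MorphismProperty.regularEpi C).IsStableUnderComposition :=
    ⟨fun f g hf hg => ⟨regcomp f g hf.regularEpi hg.regularEpi⟩⟩
  have : IsRegularEpi S.m := ⟨hmreg⟩
  have : IsRegularEpi M.act := ⟨M.regEpi⟩
  have : IsRegularEpi N.act := ⟨N.regEpi⟩
  have : IsRegularEpi (dOne S.m S.t₁ ≫ eHat₁) := ⟨hd₁⟩
  have : IsRegularEpi (dTwo S.m S.t₂ ≫ eHat₂) := ⟨hd₂⟩
  have := isRegularEpi_tensorPairing M.act N.act
  let h : Retract VoW (M.V ⊗ N.V) := ⟨sCheck, sHat, hsChecksHat⟩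
  let h₁ : Retract E₁ (A ⊗ A) := ⟨eCheck₁, eHat₁, he₁'⟩
  have hs : tensorPairing M.act N.act ≫ h.r ≫ h.i =
      S.e₁ ▷ (M.V ⊗ N.V) ≫ tensorPairing M.act N.act := by
    rw [← S.sIdem_self_eq_e₁ hn₁ hμ hε hτ hτbar, ← tensorPairing_comp_sIdem hτbM hτN, hsHatCheck]
  rw [actPair_eq_tensorPairing] at hb0
  have hr := hb0.comp_eq_self hs
  have hl := hb0.whiskerLeft_comp_eq_self hs
  refine ⟨hretract _ _ (hclosed _ _ M.mem N.mem) sCheck sHat hsChecksHat,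
    ⟨retractAct h b0, whiskerLeft_r_comp_retractAct hl, fun b' hb' => eq_retractAct (h := h) hb',
      retractAct_assoc hl hb0.assoc_of_epi,
      (hb0.isRegularEpi_retractAct (h₁ := h₁) he₁ hs).regularEpi,
      (hb0.ndLeftOnFixed he₂ hs (S.tensorPairing_act_assoc M N)
        (M.tensorPairing_act_ndLeftOn N hclosed)).retractAct hr⟩, ?_⟩
  intro V' W' VoW' v' w' sHat' b0' hb0' b hb b' hb' f hf g hg
  rw [actPair_eq_tensorPairing] at hb0'
  rw [eq_retractAct (h := h) hb]
  exact retractAct_comp hr hb'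
    (hb0.comp_eq_whiskerLeft_comp hb0' (tensorPairing_comp_tensorHom hf hg))

/-- Proposition 4.8: if idempotents split and `d̂₁`, `d̂₂` are regular
epimorphisms, then for `A`-modules `(V, v)`, `(W, w)` the splitting `V ∘ W` of the
canonical idempotent `s` carries an `A`-module structure `b`, uniquely determined by
`b ∘ (1 ⊗ sHat) = sHat ∘ b⁰`; moreover for module morphisms `f`, `g` the induced morphism
`sHat' ∘ (f ⊗ g) ∘ sCheck` is a morphism of `A`-modules. -/
theorem prop_module_structure_on_VoW
    [HasCoequalizers C] [IsIdempotentComplete C]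
    (presL : ∀ X : C, PreservesColimitsOfShape WalkingParallelPair (tensorLeft X))
    (presR : ∀ X : C, PreservesColimitsOfShape WalkingParallelPair (tensorRight X))
    (regcomp : ∀ {X Y Z : C} (f : X ⟶ Y) (g : Y ⟶ Z),
      Nonempty (RegularEpi f) → Nonempty (RegularEpi g) → Nonempty (RegularEpi (f ≫ g)))
    {A : C} {𝒴 : Set C} (S : RWMB A 𝒴)
    (hmreg : Nonempty (RegularEpi S.m))
    (hclosed : ∀ Y Y' : C, Y ∈ 𝒴 → Y' ∈ 𝒴 → (Y ⊗ Y') ∈ 𝒴)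
    (hretract : ∀ (X Y : C), Y ∈ 𝒴 → ∀ (i : X ⟶ Y) (r : Y ⟶ X), i ≫ r = 𝟙 X → X ∈ 𝒴)
    (L : C) (p : A ⟶ L)
    (hpc : S.piL1 ≫ p = S.piBarR1c ≫ p)
    (hpu : ∀ {X : C} (h : A ⟶ X), S.piL1 ≫ h = S.piBarR1c ≫ h →
      ∃! k : L ⟶ X, p ≫ k = h)
    (memL : L ∈ 𝒴)
    (n₁ : L ⊗ A ⟶ A) (hn₁ : (p ▷ A) ≫ n₁ = S.piL1)
    (hndn₁ : NdRightOn n₁ 𝒴)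
    (n₂ : A ⊗ L ⟶ A) (hn₂ : (A ◁ p) ≫ n₂ = S.piL2)
    (μ : L ⊗ L ⟶ L) (hμ : (L ◁ p) ≫ μ = n₁ ≫ p)
    (δ : L ⟶ L ⊗ L) (hδ : S.m ≫ p ≫ δ = S.t₁ ≫ (p ▷ A) ≫ (L ◁ p))
    (ε : L ⟶ 𝟙_ C) (hε : p ≫ ε = S.j)
    (hμδ : δ ≫ μ = 𝟙 L)
    (τ : A ⟶ L ⊗ A) (hτ : S.m ≫ τ = S.t₁ ≫ (p ▷ A))
    (τbar : A ⟶ A ⊗ L) (hτbar : S.m ≫ τbar = (β_ A A).hom ≫ S.t₄ ≫ (A ◁ p))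
    -- splittings `eHat₁, eCheck₁` and `eHat₂, eCheck₂` of the idempotents `e₁`, `e₂`,
    -- and the hypotheses that `d̂₁ := eHat₁ ∘ d₁` and `d̂₂ := eHat₂ ∘ d₂` are regular epis
    (E₁ : C) (eHat₁ : A ⊗ A ⟶ E₁) (eCheck₁ : E₁ ⟶ A ⊗ A)
    (he₁ : eHat₁ ≫ eCheck₁ = S.e₁) (he₁' : eCheck₁ ≫ eHat₁ = 𝟙 E₁)
    (E₂ : C) (eHat₂ : A ⊗ A ⟶ E₂) (eCheck₂ : E₂ ⟶ A ⊗ A)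
    (he₂ : eHat₂ ≫ eCheck₂ = S.e₂) (he₂' : eCheck₂ ≫ eHat₂ = 𝟙 E₂)
    (hd₁ : Nonempty (RegularEpi (dOne S.m S.t₁ ≫ eHat₁)))
    (hd₂ : Nonempty (RegularEpi (dTwo S.m S.t₂ ≫ eHat₂)))
    -- two `A`-modules `(V, v)` and `(W, w)`, with coactions as in Theorem 4.3
    (M N : AModule A S.m 𝒴)
    (τbM : M.V ⟶ M.V ⊗ L)
    (hτbM : M.act ≫ τbM = (τbar ▷ M.V) ≫ (α_ A L M.V).hom ≫ (A ◁ (β_ L M.V).hom) ≫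
      (α_ A M.V L).inv ≫ (M.act ▷ L))
    (τN : N.V ⟶ L ⊗ N.V)
    (hτN : N.act ≫ τN = (τ ▷ N.V) ≫ (α_ L A N.V).hom ≫ (L ◁ N.act))
    -- a splitting `V ∘ W` of the canonical idempotent `s`
    (VoW : C) (sHat : M.V ⊗ N.V ⟶ VoW) (sCheck : VoW ⟶ M.V ⊗ N.V)
    (hsHatCheck : sHat ≫ sCheck = sIdem μ ε τbM τN) (hsChecksHat : sCheck ≫ sHat = 𝟙 VoW)
    -- the action `b⁰` of Lemma 4.6
    (b0 : A ⊗ (M.V ⊗ N.V) ⟶ M.V ⊗ N.V)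
    (hb0 : (A ◁ actPair M.act N.act) ≫ b0
      = (α_ A (A ⊗ A) (M.V ⊗ N.V)).inv ≫ (dOne S.m S.t₁ ▷ (M.V ⊗ N.V)) ≫
          actPair M.act N.act) :
    -- `V ∘ W` is again an `A`-module:
    VoW ∈ 𝒴 ∧
    (∃ b : A ⊗ VoW ⟶ VoW,
      -- `b` is uniquely determined by `b ∘ (1 ⊗ sHat) = sHat ∘ b⁰` ...
      ((A ◁ sHat) ≫ b = b0 ≫ sHat) ∧
      (∀ b' : A ⊗ VoW ⟶ VoW, (A ◁ sHat) ≫ b' = b0 ≫ sHat → b' = b) ∧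
      -- ... and is associative, a regular epimorphism and non-degenerate on the left
      ((A ◁ b) ≫ b = (α_ A A VoW).inv ≫ (S.m ▷ VoW) ≫ b) ∧
      Nonempty (RegularEpi b) ∧
      NdLeftOn b 𝒴) ∧
    -- functoriality: for module morphisms `f : V ⟶ V′`, `g : W ⟶ W′`, the induced
    -- morphism `sHat′ ∘ (f ⊗ g) ∘ sCheck : V ∘ W ⟶ V′ ∘ W′` is a morphism of `A`-modules
    (∀ (M' N' : AModule A S.m 𝒴)
      (τbM' : M'.V ⟶ M'.V ⊗ L)
      (_ : M'.act ≫ τbM' = (τbar ▷ M'.V) ≫ (α_ A L M'.V).hom ≫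
        (A ◁ (β_ L M'.V).hom) ≫ (α_ A M'.V L).inv ≫ (M'.act ▷ L))
      (τN' : N'.V ⟶ L ⊗ N'.V)
      (_ : N'.act ≫ τN' = (τ ▷ N'.V) ≫ (α_ L A N'.V).hom ≫ (L ◁ N'.act))
      (VoW' : C) (sHat' : M'.V ⊗ N'.V ⟶ VoW') (sCheck' : VoW' ⟶ M'.V ⊗ N'.V)
      (_ : sHat' ≫ sCheck' = sIdem μ ε τbM' τN') (_ : sCheck' ≫ sHat' = 𝟙 VoW')
      (b0' : A ⊗ (M'.V ⊗ N'.V) ⟶ M'.V ⊗ N'.V)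
      (_ : (A ◁ actPair M'.act N'.act) ≫ b0'
        = (α_ A (A ⊗ A) (M'.V ⊗ N'.V)).inv ≫ (dOne S.m S.t₁ ▷ (M'.V ⊗ N'.V)) ≫
            actPair M'.act N'.act)
      (b : A ⊗ VoW ⟶ VoW) (_ : (A ◁ sHat) ≫ b = b0 ≫ sHat)
      (b' : A ⊗ VoW' ⟶ VoW') (_ : (A ◁ sHat') ≫ b' = b0' ≫ sHat')
      (f : M.V ⟶ M'.V) (_ : M.act ≫ f = (A ◁ f) ≫ M'.act)
      (g : N.V ⟶ N'.V) (_ : N.act ≫ g = (A ◁ g) ≫ N'.act),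
      b ≫ (sCheck ≫ ((f ▷ N.V) ≫ (M'.V ◁ g)) ≫ sHat')
        = (A ◁ (sCheck ≫ ((f ▷ N.V) ≫ (M'.V ◁ g)) ≫ sHat')) ≫ b') := by
  obtain ⟨mem, act, functorial⟩ := prop_module_structure_on_VoW_general presL presR regcomp S
    hmreg hclosed hretract hn₁ hμ hε hτ hτbar he₁ he₁' he₂ hd₁ hd₂ M N hτbM hτN hsHatCheck
    hsChecksHat hb0
  refine ⟨mem, act, fun M' N' _ _ _ _ VoW' sHat' _ _ _ b0' hb0' b hb b' hb' f hf g hg => ?_⟩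
  simpa only [MonoidalCategory.tensorHom_def] using functorial hb0' hb hb' hf hg

end WeakMultiplierBimonoid
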